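/- arXiv:1807.03536 — 2 statements merged into one kernel-verified Lean document; each statement's English description precedes it below -/
import Mathlib

section
/- Let Φ̊ be a reduced irreducible root system in V, let (Λ_α) be an extension datum of type (Φ̊, Y) with common values Λ_s on short and Λ_ℓ on long roots (with Λ_ℓ = Λ_s if all roots have the same length), assume that Λ_ℓ is an additive subgroup of Y whenever dim V = 2 and two root lengths occur (the paper's mild assumption for type B₂), and let Φ^re be the associated set of real roots. Then Ψ ⊆ Φ^re is a maximal closed subroot system whose gradient Gr(Ψ) is a proper closed subroot system of Φ̊ if and only if Ψ = {α ⊕ y : α ∈ Φ̊', y ∈ Λ_α} for some maximal closed subroot system Φ̊' of Φ̊, where Φ̊' is arbitrary if Λ_ℓ = Λ_s, while if Λ_ℓ ⊊ Λ_s then additionally Φ̊' ∩ Φ̊_s ≠ ∅. -/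
open scoped RealInnerProductSpace Pointwise

noncomputable section

namespace BdS

variable {V Y : Type*} [NormedAddCommGroup V] [InnerProductSpace ℝ V]
variable [AddCommGroup Y] [Module ℝ Y]

/-- `pairing β α = (β, α∨) = 2(β,α)/(α,α)`. -/
def pairing (β α : V) : ℝ := 2 * ⟪β, α⟫ / ⟪α, α⟫

/-- `reflRoot α v = s_α(v) = v − (v, α∨)α`. -/
def reflRoot (α v : V) : V := v - pairing v α • α

/-- A (finite) root system in `V`. -/
def IsRootSystem (Φ : Set V) : Prop :=
  Φ.Finite ∧ (0 : V) ∉ Φ ∧ Submodule.span ℝ Φ = ⊤ ∧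
    (∀ α ∈ Φ, ∀ β ∈ Φ, reflRoot α β ∈ Φ) ∧
    ∀ α ∈ Φ, ∀ β ∈ Φ, ∃ m : ℤ, pairing β α = (m : ℝ)

def IsReduced (Φ : Set V) : Prop :=
  ∀ α ∈ Φ, ∀ c : ℝ, c • α ∈ Φ → c • α = α ∨ c • α = -α

def IsIrreducible (Φ : Set V) : Prop :=
  ∀ Φ₁ Φ₂ : Set V, Φ = Φ₁ ∪ Φ₂ → (∀ x ∈ Φ₁, ∀ y ∈ Φ₂, ⟪x, y⟫ = 0) →
    Φ₁ = ∅ ∨ Φ₂ = ∅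

/-- divisible roots -/
def divSet (Φ : Set V) : Set V := {α ∈ Φ | (2:ℝ)⁻¹ • α ∈ Φ}
/-- non-divisible roots -/
def ndSet (Φ : Set V) : Set V := Φ \ divSet Φ
/-- short roots: non-divisible roots of non-maximal squared length -/
def shortSet (Φ : Set V) : Set V := {α ∈ ndSet Φ | ∃ β ∈ ndSet Φ, ⟪α, α⟫ < ⟪β, β⟫}
/-- long roots -/
def longSet (Φ : Set V) : Set V := ndSet Φ \ shortSet Φ

/-- An extension datum of type `(Φ, Y)`. -/
def IsExtensionDatum (Φ : Set V) (Λ : V → Set Y) : Prop :=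
  (∀ α ∈ Φ, ∀ β ∈ Φ, ∀ z ∈ Λ α, ∀ y ∈ Λ β, y - pairing β α • z ∈ Λ (reflRoot α β)) ∧
  (0 : Y) ∈ Λ 0 ∧
  (∀ α ∈ ndSet Φ, (0 : Y) ∈ Λ α) ∧
  (∀ α ∈ divSet Φ, (Λ α).Nonempty) ∧
  Submodule.span ℝ (⋃ α ∈ insert (0 : V) Φ, Λ α) = ⊤

/-- subroot system of a finite root system -/
def IsSubRS (Φ Δ : Set V) : Prop :=
  Δ.Nonempty ∧ Δ ⊆ Φ ∧ ∀ α ∈ Δ, ∀ β ∈ Δ, reflRoot α β ∈ Δ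

def IsClosedSubRS (Φ Δ : Set V) : Prop :=
  IsSubRS Φ Δ ∧ ∀ α ∈ Δ, ∀ β ∈ Δ, α + β ∈ Φ → α + β ∈ Δ

def IsMaxClosedSubRS (Φ Δ : Set V) : Prop :=
  IsClosedSubRS Φ Δ ∧ Δ ≠ Φ ∧
    ∀ Δ' : Set V, IsClosedSubRS Φ Δ' → Δ' ≠ Φ → Δ ⊆ Δ' → Δ' = Δ

/-- semi-closed subroot system, relative to given short/long/divisible parts -/
def IsSemiClosedSubRS (Φ Φs Φl Φd Δ : Set V) : Prop :=
  IsSubRS Φ Δ ∧ ¬ (∀ α ∈ Δ, ∀ β ∈ Δ, α + β ∈ Φ → α + β ∈ Δ) ∧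
    ∀ α ∈ Δ, ∀ β ∈ Δ, α + β ∈ Φ → α + β ∉ Δ →
      (α ∈ Φs ∧ β ∈ Φs ∧ α + β ∈ Φl ∪ Φd) ∨ (α ∈ Φl ∧ β ∈ Φl ∧ α + β ∈ Φd)

def IsMaxSemiClosedSubRS (Φ Φs Φl Φd Δ : Set V) : Prop :=
  IsSemiClosedSubRS Φ Φs Φl Φd Δ ∧
    ∀ Δ' : Set V, IsClosedSubRS Φ Δ' → Δ' ≠ Φ → ¬ Δ ⊂ Δ'

/-- the set of real roots attached to an extension datum -/
def PhiRe (Φ : Set V) (Λ : V → Set Y) : Set (V × Y) := {x | x.1 ∈ Φ ∧ x.2 ∈ Λ x.1}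

/-- affine reflection `s_{α ⊕ y}(β ⊕ z) = s_α(β) ⊕ (z − (β,α∨)y)` -/
def reflAff (a x : V × Y) : V × Y := (reflRoot a.1 x.1, x.2 - pairing x.1 a.1 • a.2)

/-- subroot system of a set of real roots `R` -/
def IsSubSys (R Ψ : Set (V × Y)) : Prop :=
  Ψ.Nonempty ∧ Ψ ⊆ R ∧ Ψ ≠ R ∧ ∀ a ∈ Ψ, ∀ x ∈ Ψ, reflAff a x ∈ Ψ

def IsClosedSubSys (R Ψ : Set (V × Y)) : Prop :=
  IsSubSys R Ψ ∧ ∀ x ∈ Ψ, ∀ y ∈ Ψ, x + y ∈ R → x + y ∈ Ψ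

def IsMaxClosedSubSys (R Ψ : Set (V × Y)) : Prop :=
  IsClosedSubSys R Ψ ∧ ∀ Ψ' : Set (V × Y), IsClosedSubSys R Ψ' → Ψ ⊆ Ψ' → Ψ' = Ψ

/-- gradient of a subroot system -/
def Gr (Ψ : Set (V × Y)) : Set V := {α | ∃ y : Y, (α, y) ∈ Ψ}

def Zset (Ψ : Set (V × Y)) (α : V) : Set Y := {y | (α, y) ∈ Ψ}

abbrev E (n : ℕ) := EuclideanSpace ℝ (Fin n)

def eps {n : ℕ} (i : Fin n) : E n := EuclideanSpace.single i 1

def shortBC (n : ℕ) : Set (E n) := {v | ∃ i : Fin n, v = eps i ∨ v = -eps i}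

def longBC (n : ℕ) : Set (E n) :=
  {v | ∃ i j : Fin n, i ≠ j ∧ ∃ c d : ℝ, (c = 1 ∨ c = -1) ∧ (d = 1 ∨ d = -1) ∧
    v = c • eps i + d • eps j}

def divBC (n : ℕ) : Set (E n) :=
  {v | ∃ i : Fin n, v = (2:ℝ) • eps i ∨ v = -((2:ℝ) • eps i)}

def BCn (n : ℕ) : Set (E n) := shortBC n ∪ longBC n ∪ divBC n
def Bn (n : ℕ) : Set (E n) := shortBC n ∪ longBC n
def Cn (n : ℕ) : Set (E n) := longBC n ∪ divBC n

/-!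
If `Ψ` is maximal closed with proper closed gradient `Δ`, the full preimage `PhiRe Δ Λ` of `Δ` is
closed and proper, so it is `Ψ`, and the maximality of `Δ` follows. Suppose `Δ` had no short root
although `Λl ≠ Λs`. Then `Δ` consists of all long roots. In rank different from two, irreducibility
and maximality of `Δ` force two distinct long roots at an acute angle. Their difference is a long
root, so `Λl` is a group, as it is by assumption in rank two. Then the real roots with second
component in `Λl` form a proper closed subsystem strictly larger than `Ψ`, a contradiction.

Conversely, let `Δ` be maximal closed and let `Ψ` be a proper closed subsystem containing
`PhiRe Δ Λ`. The roots over which `Ψ` contains the whole fibre form a closed subsystem, which is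
therefore `Δ`. Let `S` be the gradient of `Ψ` without `Δ`. If `α + β` is a root, where `α ∈ S` and
`β ∈ Δ`, it lies outside `Δ`, whereas its fibre would be full if `Λl = Λs` or if it made an acute
angle with `α`. Hence `S` is orthogonal to some `t ∈ Δ`, any root if `Λl = Λs` and any short one
otherwise. With `T` the set of roots of `Δ` orthogonal to `S`, the union of `T` and the roots
strongly orthogonal to `T` is a closed subsystem containing `Δ` and `S`, and it is proper by
irreducibility. So it equals `Δ`, and `S` is empty.
-/

lemma reflRoot_eq_reflection (α v : V) : reflRoot α v = (ℝ ∙ α)ᗮ.reflection v := by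
  rw [Submodule.reflection_orthogonal_apply, Submodule.reflection_singleton_apply, reflRoot,
    pairing, neg_sub, real_inner_comm, RCLike.ofReal_real_eq_id, id, real_inner_self_eq_norm_sq,
    mul_div_assoc, mul_smul, ofNat_smul_eq_nsmul]

lemma reflRoot_self (α : V) : reflRoot α α = -α := by
  rw [reflRoot_eq_reflection, Submodule.reflection_orthogonalComplement_singleton_eq_neg]

@[simp]
lemma reflRoot_reflRoot (α v : V) : reflRoot α (reflRoot α v) = v := by
  simp only [reflRoot_eq_reflection, Submodule.reflection_reflection]

lemma reflRoot_add (α v w : V) : reflRoot α (v + w) = reflRoot α v + reflRoot α w := by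
  simp only [reflRoot_eq_reflection, map_add]

@[simp]
lemma inner_reflRoot_reflRoot (α v w : V) : ⟪reflRoot α v, reflRoot α w⟫ = ⟪v, w⟫ := by
  simp only [reflRoot_eq_reflection, LinearIsometryEquiv.inner_map_map]

lemma pairing_self {α : V} (hα : α ≠ 0) : pairing α α = 2 :=
  mul_div_cancel_right₀ _ (inner_self_ne_zero.2 hα)

lemma pairing_eq_zero_iff {α β : V} : pairing β α = 0 ↔ ⟪β, α⟫ = 0 := by
  rcases eq_or_ne α 0 with rfl | hα <;> simp_all [pairing]

lemma pairing_pos_iff {α β : V} : 0 < pairing β α ↔ 0 < ⟪β, α⟫ := by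
  rcases eq_or_ne α 0 with rfl | hα
  · simp [pairing]
  · rw [pairing, div_pos_iff_of_pos_right (real_inner_self_pos.2 hα),
      mul_pos_iff_of_pos_left two_pos]

lemma reflRoot_of_inner_eq_zero {α v : V} (h : ⟪v, α⟫ = 0) : reflRoot α v = v := by
  rw [reflRoot, pairing_eq_zero_iff.2 h, zero_smul, sub_zero]

lemma inner_reflRoot_left (α v w : V) : ⟪reflRoot α v, w⟫ = ⟪v, w⟫ - pairing v α * ⟪α, w⟫ := by
  rw [reflRoot, inner_sub_left, real_inner_smul_left]

/-- The coroot `α∨` as the linear form `v ↦ (v, α∨)`. -/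
def corootForm (α : V) : Module.Dual ℝ V := (2 / ⟪α, α⟫) • innerₗ V α

lemma corootForm_apply (α v : V) : corootForm α v = pairing v α := by
  rw [corootForm, LinearMap.smul_apply, innerₗ_apply_apply, real_inner_comm v α, smul_eq_mul,
    pairing, div_mul_eq_mul_div]

lemma corootForm_injOn : Set.InjOn (corootForm (V := V)) {0}ᶜ := by
  intro α hα β hβ h
  have hpair (v : V) : pairing v α = pairing v β := by
    rw [← corootForm_apply, h, corootForm_apply]
  have hα' : ⟪α, β⟫ = ⟪β, β⟫ := by
    have h2 := (hpair α).symm.trans (pairing_self hα)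
    rw [pairing, div_eq_iff (inner_self_ne_zero.2 hβ)] at h2
    exact mul_left_cancel₀ two_ne_zero h2
  have hβ' : ⟪β, α⟫ = ⟪α, α⟫ := by
    have h2 := (hpair β).trans (pairing_self hβ)
    rw [pairing, div_eq_iff (inner_self_ne_zero.2 hα)] at h2
    exact mul_left_cancel₀ two_ne_zero h2
  refine sub_eq_zero.1 (inner_self_eq_zero (𝕜 := ℝ).1 ?_)
  simp only [inner_sub_left, inner_sub_right, hα', hβ', sub_self]

section RootSystem

variable {Φ : Set V}

namespace IsRootSystem

lemma ne_zero (hΦ : IsRootSystem Φ) {α : V} (hα : α ∈ Φ) : α ≠ 0 := ne_of_mem_of_not_mem hα hΦ.2.1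

lemma inner_self_pos (hΦ : IsRootSystem Φ) {α : V} (hα : α ∈ Φ) : 0 < ⟪α, α⟫ :=
  real_inner_self_pos.2 (hΦ.ne_zero hα)

lemma reflRoot_mem (hΦ : IsRootSystem Φ) {α β : V} (hα : α ∈ Φ) (hβ : β ∈ Φ) : reflRoot α β ∈ Φ :=
  hΦ.2.2.2.1 α hα β hβ

protected lemma neg_mem (hΦ : IsRootSystem Φ) {α : V} (hα : α ∈ Φ) : -α ∈ Φ :=
  reflRoot_self α ▸ hΦ.reflRoot_mem hα hα

lemma finiteDimensional (hΦ : IsRootSystem Φ) : FiniteDimensional ℝ V :=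
  Module.finite_def.2 (Submodule.fg_def.2 ⟨Φ, hΦ.1, hΦ.2.2.1⟩)

/-- The root system `Φ` as one of Mathlib's `RootPairing`s, indexed by its own roots and paired
with the dual space of `V`. -/
def toRootPairing (hΦ : IsRootSystem Φ) : RootPairing Φ ℝ V (Module.Dual ℝ V) :=
  haveI := hΦ.finiteDimensional
  haveI := hΦ.1.to_subtype
  .mk'' (Module.Dual.eval ℝ V) (.subtype _)
    ⟨fun α ↦ corootForm (α : V), fun α β h ↦
      Subtype.ext (corootForm_injOn (hΦ.ne_zero α.2) (hΦ.ne_zero β.2) h)⟩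
    (fun α ↦ (corootForm_apply _ _).trans (pairing_self (hΦ.ne_zero α.2)))
    (by
      rintro α - ⟨β, rfl⟩
      refine ⟨⟨_, hΦ.reflRoot_mem α.2 β.2⟩, ?_⟩
      exact congrArg (fun c : ℝ ↦ (β : V) - c • (α : V)) (corootForm_apply (α : V) β).symm)
    (by simpa using hΦ.2.2.1)

@[simp]
lemma toRootPairing_root (hΦ : IsRootSystem Φ) (α : Φ) : hΦ.toRootPairing.root α = α := rfl

@[simp]
lemma toRootPairing_pairing (hΦ : IsRootSystem Φ) (α β : Φ) :
    hΦ.toRootPairing.pairing α β = pairing (α : V) β :=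
  corootForm_apply _ _

lemma toRootPairing_reflection (hΦ : IsRootSystem Φ) (α : Φ) (v : V) :
    hΦ.toRootPairing.reflection α v = reflRoot (α : V) v := by
  rw [RootPairing.reflection_apply]
  exact congrArg (fun c : ℝ ↦ v - c • (α : V)) (corootForm_apply (α : V) v)

lemma isCrystallographic_toRootPairing (hΦ : IsRootSystem Φ) :
    hΦ.toRootPairing.IsCrystallographic :=
  ⟨fun α β ↦ by
    obtain ⟨m, hm⟩ := hΦ.2.2.2.2 β β.2 α α.2
    exact ⟨m, by simp [hm]⟩⟩

lemma isReduced_toRootPairing (hΦ : IsRootSystem Φ) (hred : IsReduced Φ) :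
    hΦ.toRootPairing.IsReduced := by
  refine ⟨fun α β h ↦ ?_⟩
  simp only [toRootPairing_root, LinearIndependent.pair_iff' (hΦ.ne_zero α.2), not_forall,
    not_not] at h
  obtain ⟨c, hc⟩ := h
  rcases hred α α.2 c (hc ▸ β.2) with h | h
  · exact .inl (h.symm.trans hc)
  · exact .inr (neg_eq_iff_eq_neg.1 (h.symm.trans hc))

lemma isIrreducible_toRootPairing (hΦ : IsRootSystem Φ) (hirr : IsIrreducible Φ)
    (hne : Φ.Nonempty) : hΦ.toRootPairing.IsIrreducible := by
  have : Nontrivial V := ⟨_, 0, hΦ.ne_zero hne.some_mem⟩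
  refine .mk' _ fun q hq hq0 ↦ ?_
  have hmem_or : ∀ α ∈ Φ, α ∈ q ∨ α ∈ qᗮ := by
    intro α hα
    by_cases hαq : α ∈ q
    · exact .inl hαq
    refine .inr ((Submodule.mem_orthogonal _ _).2 fun v hv ↦ pairing_eq_zero_iff.1 ?_)
    have hrefl : reflRoot α v ∈ q := hΦ.toRootPairing_reflection ⟨α, hα⟩ v ▸ hq ⟨α, hα⟩ hv
    rw [reflRoot, q.sub_mem_iff_right hv] at hrefl
    by_contra hc
    exact hαq ((q.smul_mem_iff hc).1 hrefl)
  have htop {p : Submodule ℝ V} (hp : Φ ∩ p = Φ) : p = ⊤ :=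
    top_le_iff.1 (hΦ.2.2.1 ▸ Submodule.span_le.2 (Set.inter_eq_left.1 hp))
  have hunion : Φ = (Φ ∩ q) ∪ (Φ ∩ qᗮ) := by
    rw [← Set.inter_union_distrib_left]
    exact (Set.inter_eq_left.2 hmem_or).symm
  rcases hirr _ _ hunion fun x hx y hy ↦ Submodule.inner_right_of_mem_orthogonal hx.2 hy.2
    with h | h
  · rw [h, Set.empty_union] at hunion
    exact absurd ((Submodule.orthogonal_eq_top_iff q).1 (htop hunion.symm)) hq0
  · rw [h, Set.union_empty] at hunion
    exact htop hunion.symm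

/-- The inner product of `V` as an invariant form of the root pairing. -/
def innerInvariantForm (hΦ : IsRootSystem Φ) : hΦ.toRootPairing.InvariantForm where
  form := innerₗ V
  symm := ⟨fun v w ↦ real_inner_comm w v⟩
  ne_zero α := (hΦ.inner_self_pos α.2).ne'
  isOrthogonal_reflection α v w := by
    simp only [toRootPairing_reflection, innerₗ_apply_apply, inner_reflRoot_reflRoot]

lemma exists_inner_self_eq_and_inner_ne_zero (hΦ : IsRootSystem Φ) (hirr : IsIrreducible Φ)
    {α β : V} (hα : α ∈ Φ) (hβ : β ∈ Φ) : ∃ γ ∈ Φ, ⟪γ, γ⟫ = ⟪β, β⟫ ∧ ⟪α, γ⟫ ≠ 0 := by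
  have := hΦ.isIrreducible_toRootPairing hirr ⟨α, hα⟩
  obtain ⟨γ, h⟩ := hΦ.toRootPairing.exists_form_eq_form_and_form_ne_zero hΦ.innerInvariantForm
    ⟨α, hα⟩ ⟨β, hβ⟩
  exact ⟨γ, γ.2, h⟩

lemma inner_self_eq_or_of_ne (hΦ : IsRootSystem Φ) (hred : IsReduced Φ) (hirr : IsIrreducible Φ)
    {α β γ : V} (hα : α ∈ Φ) (hβ : β ∈ Φ) (hγ : γ ∈ Φ) (hne : ⟪α, α⟫ ≠ ⟪β, β⟫) :
    ⟪γ, γ⟫ = ⟪α, α⟫ ∨ ⟪γ, γ⟫ = ⟪β, β⟫ := by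
  have := hΦ.1.to_subtype
  have := hΦ.isCrystallographic_toRootPairing
  have := hΦ.isReduced_toRootPairing hred
  have := hΦ.isIrreducible_toRootPairing hirr ⟨α, hα⟩
  exact hΦ.innerInvariantForm.apply_eq_or_of_apply_ne (i := ⟨α, hα⟩) (j := ⟨β, hβ⟩) hne ⟨γ, hγ⟩

lemma pairing_eq_one_or_pairing_eq_one (hΦ : IsRootSystem Φ) {α β : V} (hα : α ∈ Φ) (hβ : β ∈ Φ)
    (hne : α ≠ β) (hpos : 0 < ⟪α, β⟫) : pairing α β = 1 ∨ pairing β α = 1 := by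
  have := hΦ.1.to_subtype
  have := hΦ.isCrystallographic_toRootPairing
  let P := hΦ.toRootPairing
  let i : Φ := ⟨α, hα⟩
  let j : Φ := ⟨β, hβ⟩
  have hij : (P.pairingIn ℤ i j : ℝ) = pairing α β :=
    (P.algebraMap_pairingIn ℤ i j).trans (hΦ.toRootPairing_pairing i j)
  have hji : (P.pairingIn ℤ j i : ℝ) = pairing β α :=
    (P.algebraMap_pairingIn ℤ j i).trans (hΦ.toRootPairing_pairing j i)
  have hij_pos : 0 < P.pairingIn ℤ i j := by
    exact_mod_cast hij ▸ pairing_pos_iff.2 hpos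
  have hne22 : ¬ (P.pairingIn ℤ i j = 2 ∧ P.pairingIn ℤ j i = 2) := by
    rw [P.pairingIn_two_two_iff]
    exact fun h ↦ hne (congrArg Subtype.val h)
  have hone : P.pairingIn ℤ i j = 1 ∨ P.pairingIn ℤ j i = 1 := by
    have := P.pairingIn_pairingIn_mem_set_of_isCrystallographic i j
    simp only [Set.mem_insert_iff, Set.mem_singleton_iff, Prod.mk.injEq] at this
    omega
  rw [← hij, ← hji]
  exact_mod_cast hone

protected lemma sub_mem (hΦ : IsRootSystem Φ) {α β : V} (hα : α ∈ Φ) (hβ : β ∈ Φ) (hne : α ≠ β)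
    (hpos : 0 < ⟪α, β⟫) : α - β ∈ Φ := by
  rcases hΦ.pairing_eq_one_or_pairing_eq_one hα hβ hne hpos with h | h
  · simpa [reflRoot, h] using hΦ.reflRoot_mem hβ hα
  · simpa [reflRoot, h] using hΦ.neg_mem (hΦ.reflRoot_mem hα hβ)

lemma inner_self_sub_eq_or (hΦ : IsRootSystem Φ) {α β : V} (hα : α ∈ Φ) (hβ : β ∈ Φ) (hne : α ≠ β)
    (hpos : 0 < ⟪α, β⟫) : ⟪α - β, α - β⟫ = ⟪α, α⟫ ∨ ⟪α - β, α - β⟫ = ⟪β, β⟫ := by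
  rcases hΦ.pairing_eq_one_or_pairing_eq_one hα hβ hne hpos with h | h
  · left
    simpa [reflRoot, h] using inner_reflRoot_reflRoot β α α
  · right
    rw [← neg_sub β α, inner_neg_neg]
    simpa [reflRoot, h] using inner_reflRoot_reflRoot α β β

protected lemma add_mem (hΦ : IsRootSystem Φ) {α β : V} (hα : α ∈ Φ) (hβ : β ∈ Φ) (hne : α ≠ -β)
    (hneg : ⟪α, β⟫ < 0) : α + β ∈ Φ :=
  sub_neg_eq_add α β ▸ hΦ.sub_mem hα (hΦ.neg_mem hβ) hne (by simpa [inner_neg_right] using hneg)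

lemma ndSet_eq (hΦ : IsRootSystem Φ) (hred : IsReduced Φ) : ndSet Φ = Φ := by
  refine sdiff_eq_left.2 (Set.disjoint_left.2 fun α hα hdiv ↦ ?_)
  rcases hred α hα _ hdiv.2 with h | h
  · exact absurd (smul_left_injective ℝ (hΦ.ne_zero hα) (h.trans (one_smul ℝ α).symm)) (by norm_num)
  · exact absurd (smul_left_injective ℝ (hΦ.ne_zero hα) (h.trans (neg_one_smul ℝ α).symm))
      (by norm_num)

lemma mem_shortSet_iff (hΦ : IsRootSystem Φ) (hred : IsReduced Φ) {α : V} :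
    α ∈ shortSet Φ ↔ α ∈ Φ ∧ ∃ β ∈ Φ, ⟪α, α⟫ < ⟪β, β⟫ := by
  rw [shortSet, hΦ.ndSet_eq hred, Set.mem_ofPred_eq]

lemma mem_longSet_iff (hΦ : IsRootSystem Φ) (hred : IsReduced Φ) {α : V} :
    α ∈ longSet Φ ↔ α ∈ Φ ∧ ∀ β ∈ Φ, ⟪β, β⟫ ≤ ⟪α, α⟫ := by
  rw [longSet, Set.mem_sdiff, hΦ.mem_shortSet_iff hred, hΦ.ndSet_eq hred]
  grind

lemma mem_shortSet_or_mem_longSet (hΦ : IsRootSystem Φ) (hred : IsReduced Φ) {α : V}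
    (hα : α ∈ Φ) : α ∈ shortSet Φ ∨ α ∈ longSet Φ :=
  or_iff_not_imp_left.2 fun h ↦ ⟨(hΦ.ndSet_eq hred).ge hα, h⟩

lemma inner_self_le_of_mem_shortSet (hΦ : IsRootSystem Φ) (hred : IsReduced Φ)
    (hirr : IsIrreducible Φ) {α β : V} (hα : α ∈ shortSet Φ) (hβ : β ∈ Φ) : ⟪α, α⟫ ≤ ⟪β, β⟫ := by
  obtain ⟨hαΦ, γ, hγ, hlt⟩ := (hΦ.mem_shortSet_iff hred).1 hα
  rcases hΦ.inner_self_eq_or_of_ne hred hirr hαΦ hγ hβ hlt.ne with h | h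
  · exact h.ge
  · exact h ▸ hlt.le

lemma reflRoot_mem_longSet (hΦ : IsRootSystem Φ) (hred : IsReduced Φ) {α β : V} (hα : α ∈ Φ)
    (hβ : β ∈ longSet Φ) : reflRoot α β ∈ longSet Φ := by
  rw [hΦ.mem_longSet_iff hred] at hβ ⊢
  rw [inner_reflRoot_reflRoot]
  exact ⟨hΦ.reflRoot_mem hα hβ.1, hβ.2⟩

lemma neg_mem_longSet (hΦ : IsRootSystem Φ) (hred : IsReduced Φ) {α : V} (hα : α ∈ longSet Φ) :
    -α ∈ longSet Φ :=
  reflRoot_self α ▸ hΦ.reflRoot_mem_longSet hred hα.1.1 hα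

lemma add_mem_longSet (hΦ : IsRootSystem Φ) (hred : IsReduced Φ) {α β : V} (hα : α ∈ longSet Φ)
    (hβ : β ∈ longSet Φ) (hαβ : α + β ∈ Φ) : α + β ∈ longSet Φ := by
  rw [hΦ.mem_longSet_iff hred] at *
  have hβα := hβ.2 α hα.1
  suffices hle : ⟪α, α⟫ ≤ ⟪α + β, α + β⟫ from ⟨hαβ, fun γ hγ ↦ (hα.2 γ hγ).trans hle⟩
  rcases le_or_gt 0 ⟪α, β⟫ with hnonneg | hneg
  · rw [real_inner_add_add_self]
    linarith [hΦ.inner_self_pos hβ.1]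
  · have hne : α ≠ -β := fun h ↦ hΦ.ne_zero hαβ (by rw [h, neg_add_cancel])
    have hpos : 0 < ⟪α, -β⟫ := by rwa [inner_neg_right, neg_pos]
    have hlen := hΦ.inner_self_sub_eq_or hα.1 (hΦ.neg_mem hβ.1) hne hpos
    rw [sub_neg_eq_add, inner_neg_neg] at hlen
    rcases hlen with h | h <;> rw [h]
    exact hβα

lemma isClosedSubRS_longSet (hΦ : IsRootSystem Φ) (hred : IsReduced Φ)
    (hne : (longSet Φ).Nonempty) : IsClosedSubRS Φ (longSet Φ) :=
  ⟨⟨hne, fun _ hα ↦ hα.1.1, fun _ hα _ hβ ↦ hΦ.reflRoot_mem_longSet hred hα.1.1 hβ⟩,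
    fun _ hα _ hβ hαβ ↦ hΦ.add_mem_longSet hred hα hβ hαβ⟩

end IsRootSystem

lemma IsClosedSubRS.neg_mem {Δ : Set V} (hΔ : IsClosedSubRS Φ Δ) {α : V} (hα : α ∈ Δ) : -α ∈ Δ :=
  reflRoot_self α ▸ hΔ.1.2.2 α hα α hα

lemma IsRootSystem.isClosedSubRS_inter_submodule (hΦ : IsRootSystem Φ) {U : Submodule ℝ V}
    (hne : (Φ ∩ U).Nonempty) : IsClosedSubRS Φ (Φ ∩ U) :=
  ⟨⟨hne, Set.inter_subset_left, fun _ hα _ hβ ↦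
    ⟨hΦ.reflRoot_mem hα.1 hβ.1, U.sub_mem hβ.2 (U.smul_mem _ hα.2)⟩⟩,
    fun _ hα _ hβ hαβ ↦ ⟨hαβ, U.add_mem hα.2 hβ.2⟩⟩

/-- The roots of `Φ` strongly orthogonal to `T`. For `t ∈ T ∩ Φ` the reflection in `t` swaps `γ + t`
and `γ - t`, so only sums need to be excluded. -/
def strongOrth (Φ T : Set V) : Set V := {γ ∈ Φ | ∀ t ∈ T, ⟪γ, t⟫ = 0 ∧ γ + t ∉ Φ}

lemma reflRoot_mem_strongOrth (hΦ : IsRootSystem Φ) {T : Set V} {α β : V}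
    (hα : α ∈ strongOrth Φ T) (hβ : β ∈ strongOrth Φ T) : reflRoot α β ∈ strongOrth Φ T := by
  refine ⟨hΦ.reflRoot_mem hα.1 hβ.1, fun t ht ↦ ⟨?_, fun hsum ↦ (hβ.2 t ht).2 ?_⟩⟩
  · rw [inner_reflRoot_left, (hα.2 t ht).1, (hβ.2 t ht).1, mul_zero, sub_zero]
  · have hfix : reflRoot α t = t :=
      reflRoot_of_inner_eq_zero ((real_inner_comm _ _).trans (hα.2 t ht).1)
    simpa only [reflRoot_add, reflRoot_reflRoot, hfix] using hΦ.reflRoot_mem hα.1 hsum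

lemma inner_add_add_nonpos_of_mem_strongOrth (hΦ : IsRootSystem Φ) {T : Set V} (hT : T ⊆ Φ)
    {α β t : V} (hα : α ∈ Φ) (hβ : β ∈ strongOrth Φ T) (ht : t ∈ T) (h : α + (β + t) ∈ Φ) :
    ⟪α + (β + t), α⟫ ≤ 0 := by
  by_contra! hpos
  have hne : α + (β + t) ≠ α := by
    intro heq
    have ht0 : ⟪β + t, t⟫ = 0 := by rw [add_eq_left.1 heq, inner_zero_left]
    rw [inner_add_left, (hβ.2 t ht).1, zero_add] at ht0
    exact (hΦ.inner_self_pos (hT ht)).ne' ht0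
  exact (hβ.2 t ht).2 (add_sub_cancel_left α (β + t) ▸ hΦ.sub_mem h hα hne hpos)

lemma add_mem_strongOrth (hΦ : IsRootSystem Φ) {T : Set V} (hT : T ⊆ Φ) {α β : V}
    (hα : α ∈ strongOrth Φ T) (hβ : β ∈ strongOrth Φ T) (hαβ : α + β ∈ Φ) :
    α + β ∈ strongOrth Φ T := by
  refine ⟨hαβ, fun t ht ↦ ⟨?_, fun hsum ↦ ?_⟩⟩
  · rw [inner_add_left, (hα.2 t ht).1, (hβ.2 t ht).1, add_zero]
  · have h₁ := inner_add_add_nonpos_of_mem_strongOrth hΦ hT hα.1 hβ ht (add_assoc α β t ▸ hsum)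
    have h₂ := inner_add_add_nonpos_of_mem_strongOrth hΦ hT hβ.1 hα ht
      (by rwa [← add_assoc, add_comm β])
    have hpos := hΦ.inner_self_pos hαβ
    simp only [inner_add_left, inner_add_right, real_inner_comm _ t, (hα.2 t ht).1,
      (hβ.2 t ht).1] at h₁ h₂ hpos
    linarith

lemma isClosedSubRS_union_strongOrth (hΦ : IsRootSystem Φ) {T : Set V} (hT : IsClosedSubRS Φ T) :
    IsClosedSubRS Φ (T ∪ strongOrth Φ T) := by
  obtain ⟨⟨hne, hsub, hrefl⟩, hadd⟩ := hT
  refine ⟨⟨hne.mono Set.subset_union_left, Set.union_subset hsub fun γ hγ ↦ hγ.1, ?_⟩, ?_⟩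
  · rintro α (hα | hα) β (hβ | hβ)
    · exact .inl (hrefl α hα β hβ)
    · exact .inr (by rwa [reflRoot_of_inner_eq_zero (hβ.2 α hα).1])
    · exact .inl (by
        rwa [reflRoot_of_inner_eq_zero ((real_inner_comm _ _).trans (hα.2 β hβ).1)])
    · exact .inr (reflRoot_mem_strongOrth hΦ hα hβ)
  · rintro α (hα | hα) β (hβ | hβ) hαβ
    · exact .inl (hadd α hα β hβ hαβ)
    · exact absurd (add_comm α β ▸ hαβ) (hβ.2 α hα).2
    · exact absurd hαβ (hα.2 β hβ).2
    · exact .inr (add_mem_strongOrth hΦ hsub hα hβ hαβ)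

lemma strongOrth_eq_empty_of_union_eq (hirr : IsIrreducible Φ) {T : Set V} (hT : T.Nonempty)
    (h : T ∪ strongOrth Φ T = Φ) : strongOrth Φ T = ∅ :=
  (hirr T _ h.symm fun t ht _ hγ ↦ (real_inner_comm _ _).trans (hγ.2 t ht).1).resolve_left
    hT.ne_empty

lemma mem_strongOrth_of_mem_longSet (hΦ : IsRootSystem Φ) (hred : IsReduced Φ) {T : Set V}
    (hT : T ⊆ Φ) {γ : V} (hγ : γ ∈ longSet Φ) (horth : ∀ t ∈ T, ⟪γ, t⟫ = 0) :
    γ ∈ strongOrth Φ T := by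
  refine ⟨hγ.1.1, fun t ht ↦ ⟨horth t ht, fun hsum ↦ ?_⟩⟩
  have hle := ((hΦ.mem_longSet_iff hred).1 hγ).2 _ hsum
  rw [real_inner_add_add_self, horth t ht] at hle
  linarith [hΦ.inner_self_pos (hT ht)]

lemma inter_submodule_union_strongOrth_ne (hΦ : IsRootSystem Φ) (hirr : IsIrreducible Φ)
    {U : Submodule ℝ V} (hU : U ≠ ⊤) (hne : (Φ ∩ U).Nonempty) :
    (Φ ∩ U) ∪ strongOrth Φ (Φ ∩ U) ≠ Φ := by
  intro h
  rw [strongOrth_eq_empty_of_union_eq hirr hne h, Set.union_empty] at h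
  exact hU (top_le_iff.1 (hΦ.2.2.1 ▸ Submodule.span_le.2 (Set.inter_eq_left.1 h)))

lemma finrank_span_pair_eq_two (hΦ : IsRootSystem Φ) (hred : IsReduced Φ) {α β : V} (hα : α ∈ Φ)
    (hβ : β ∈ Φ) (hne : ⟪α, α⟫ ≠ ⟪β, β⟫) : Module.finrank ℝ (Submodule.span ℝ {α, β}) = 2 := by
  have hli : LinearIndependent ℝ ![α, β] := by
    rw [LinearIndependent.pair_iff' (hΦ.ne_zero hα)]
    rintro c rfl
    rcases hred α hα c hβ with h | h <;> simp [h] at hne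
  rw [← Matrix.range_cons_cons_empty α β ![], finrank_span_eq_card hli, Fintype.card_fin]

lemma eq_or_eq_neg_of_inner_ne_zero {L : Set V} (hneg : ∀ α ∈ L, -α ∈ L)
    (hobtuse : ∀ α ∈ L, ∀ β ∈ L, α ≠ β → ⟪α, β⟫ ≤ 0) {α β : V} (hα : α ∈ L) (hβ : β ∈ L)
    (hne : ⟪α, β⟫ ≠ 0) : α = β ∨ α = -β := by
  by_contra! h
  have h₁ := hobtuse α hα β hβ h.1
  have h₂ := hobtuse α hα (-β) (hneg β hβ) h.2
  rw [inner_neg_right] at h₂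
  exact hne (by linarith)

lemma exists_mem_longSet_inner_ne_zero (hΦ : IsRootSystem Φ) (hred : IsReduced Φ)
    (hirr : IsIrreducible Φ) (hne : (longSet Φ).Nonempty) {α : V} (hα : α ∈ Φ) :
    ∃ γ ∈ longSet Φ, ⟪α, γ⟫ ≠ 0 := by
  obtain ⟨β, hβ⟩ := hne
  obtain ⟨γ, hγ, hlen, hαγ⟩ := hΦ.exists_inner_self_eq_and_inner_ne_zero hirr hα hβ.1.1
  refine ⟨γ, ?_, hαγ⟩
  rw [hΦ.mem_longSet_iff hred] at hβ ⊢
  exact ⟨hγ, hlen ▸ hβ.2⟩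

/- By `hobtuse` a long root is `± e`, `± s_g e` or orthogonal to both of these, which span the plane
of `e` and `g`. -/
lemma longSet_subset_span_pair_union_strongOrth (hΦ : IsRootSystem Φ) (hred : IsReduced Φ)
    (hobtuse : ∀ α ∈ longSet Φ, ∀ β ∈ longSet Φ, α ≠ β → ⟪α, β⟫ ≤ 0) {e g : V}
    (he : e ∈ longSet Φ) (hg : g ∈ Φ) (hge : ⟪g, e⟫ ≠ 0) :
    longSet Φ ⊆ (Φ ∩ Submodule.span ℝ {e, g}) ∪ strongOrth Φ (Φ ∩ Submodule.span ℝ {e, g}) := by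
  intro x hx
  set U := Submodule.span ℝ {e, g}
  have heU : e ∈ U := Submodule.mem_span_of_mem (by simp)
  have hgU : g ∈ U := Submodule.mem_span_of_mem (by simp)
  have hmem {y : V} (hyL : y ∈ longSet Φ) (hyU : y ∈ U) (hxy : ⟪x, y⟫ ≠ 0) : x ∈ Φ ∩ U := by
    refine ⟨hx.1.1, ?_⟩
    rcases eq_or_eq_neg_of_inner_ne_zero (fun _ ↦ hΦ.neg_mem_longSet hred) hobtuse hx hyL hxy
      with rfl | rfl
    exacts [hyU, U.neg_mem hyU]
  rcases ne_or_eq ⟪x, e⟫ 0 with hxe | hxe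
  · exact .inl (hmem he heU hxe)
  rcases ne_or_eq ⟪x, reflRoot g e⟫ 0 with hxf | hxf
  · exact .inl (hmem (hΦ.reflRoot_mem_longSet hred hg he) (U.sub_mem heU (U.smul_mem _ hgU)) hxf)
  refine .inr (mem_strongOrth_of_mem_longSet hΦ hred Set.inter_subset_left hx fun t ht ↦ ?_)
  have hxg : ⟪x, g⟫ = 0 := by
    rw [real_inner_comm, inner_reflRoot_left, real_inner_comm, hxe, zero_sub, neg_eq_zero,
      mul_eq_zero, pairing_eq_zero_iff, real_inner_comm] at hxf
    exact (real_inner_comm _ _).trans (hxf.resolve_left hge)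
  obtain ⟨p, q, rfl⟩ := Submodule.mem_span_pair.1 ht.2
  simp only [inner_add_right, real_inner_smul_right, hxe, hxg, mul_zero, add_zero]

lemma exists_mem_longSet_inner_pos (hΦ : IsRootSystem Φ) (hred : IsReduced Φ)
    (hirr : IsIrreducible Φ) (hmax : IsMaxClosedSubRS Φ (longSet Φ))
    (hshort : (shortSet Φ).Nonempty) (hdim : Module.finrank ℝ V ≠ 2) :
    ∃ α ∈ longSet Φ, ∃ β ∈ longSet Φ, α ≠ β ∧ 0 < ⟪α, β⟫ := by
  by_contra! hobtuse
  obtain ⟨g, hg⟩ := hshort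
  obtain ⟨e, he, hge⟩ := exists_mem_longSet_inner_ne_zero hΦ hred hirr hmax.1.1.1 hg.1.1
  let U := Submodule.span ℝ {e, g}
  have hlen : ⟪e, e⟫ ≠ ⟪g, g⟫ := by
    intro h
    obtain ⟨-, β, hβ, hlt⟩ := (hΦ.mem_shortSet_iff hred).1 hg
    exact hlt.not_ge (h ▸ ((hΦ.mem_longSet_iff hred).1 he).2 β hβ)
  have hU : U ≠ ⊤ := fun h ↦
    hdim (by rw [← finrank_top ℝ V, ← h, finrank_span_pair_eq_two hΦ hred he.1.1 hg.1.1 hlen])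
  have hgU : g ∈ Φ ∩ U := ⟨hg.1.1, Submodule.mem_span_of_mem (by simp)⟩
  have heq := hmax.2.2 _
    (isClosedSubRS_union_strongOrth hΦ (hΦ.isClosedSubRS_inter_submodule ⟨g, hgU⟩))
    (inter_submodule_union_strongOrth_ne hΦ hirr hU ⟨g, hgU⟩)
    (longSet_subset_span_pair_union_strongOrth hΦ hred hobtuse he hg.1.1 hge)
  exact (heq ▸ .inl hgU : g ∈ longSet Φ).2 hg

/-- The roots of `Δ` orthogonal to every element of `S`. When the reflections in `Δ` stabilise `S`,
this set together with its strong orthogonal contains `Δ`. -/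
def orthRoots (Δ S : Set V) : Set V := {t ∈ Δ | ∀ α ∈ S, ⟪t, α⟫ = 0}

lemma isClosedSubRS_orthRoots {Δ S : Set V} (hΔ : IsClosedSubRS Φ Δ)
    (hne : (orthRoots Δ S).Nonempty) : IsClosedSubRS Φ (orthRoots Δ S) := by
  refine ⟨⟨hne, fun t ht ↦ hΔ.1.2.1 ht.1, fun s hs t ht ↦
    ⟨hΔ.1.2.2 s hs.1 t ht.1, fun α hα ↦ ?_⟩⟩, fun s hs t ht hst ↦
    ⟨hΔ.2 s hs.1 t ht.1 hst, fun α hα ↦ ?_⟩⟩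
  · rw [inner_reflRoot_left, hs.2 α hα, ht.2 α hα, mul_zero, sub_zero]
  · rw [inner_add_left, hs.2 α hα, ht.2 α hα, add_zero]

lemma subset_orthRoots_union_strongOrth (hΦ : IsRootSystem Φ) {Δ S : Set V}
    (hΔ : IsClosedSubRS Φ Δ) (hrefl : ∀ β ∈ Δ, ∀ α ∈ S, reflRoot β α ∈ S) :
    Δ ⊆ orthRoots Δ S ∪ strongOrth Φ (orthRoots Δ S) := by
  have horth {β α t : V} (hβ : β ∈ Δ) (hα : α ∈ S) (hβα : ⟪β, α⟫ ≠ 0) (ht : t ∈ orthRoots Δ S) :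
      ⟪β, t⟫ = 0 := by
    have h := ht.2 _ (hrefl β hβ α hα)
    rw [real_inner_comm, inner_reflRoot_left, real_inner_comm, ht.2 α hα, zero_sub, neg_eq_zero,
      mul_eq_zero, pairing_eq_zero_iff, real_inner_comm] at h
    exact h.resolve_left hβα
  intro β hβ
  refine or_iff_not_imp_left.2 fun hβT ↦ ?_
  obtain ⟨α, hα, hβα⟩ : ∃ α ∈ S, ⟪β, α⟫ ≠ 0 := by
    by_contra! h
    exact hβT ⟨hβ, h⟩
  refine ⟨hΔ.1.2.1 hβ, fun t ht ↦ ⟨horth hβ hα hβα ht, fun hsum ↦ ?_⟩⟩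
  have hβtα : ⟪β + t, α⟫ ≠ 0 := by rwa [inner_add_left, ht.2 α hα, add_zero]
  have h := horth (hΔ.2 β hβ t ht.1 hsum) hα hβtα ht
  rw [inner_add_left, horth hβ hα hβα ht, zero_add] at h
  exact (hΦ.inner_self_pos (hΔ.1.2.1 ht.1)).ne' h

lemma IsMaxClosedSubRS.eq_empty_of_forall_reflRoot_mem (hΦ : IsRootSystem Φ)
    (hirr : IsIrreducible Φ) {Δ S : Set V} (hΔ : IsMaxClosedSubRS Φ Δ) (hSΦ : S ⊆ Φ)
    (hSΔ : Disjoint S Δ) (hrefl : ∀ β ∈ Δ, ∀ α ∈ S, reflRoot β α ∈ S)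
    (hstrong : ∀ α ∈ S, ∀ β ∈ Δ, ⟪α, β⟫ = 0 → α + β ∉ Φ) (hne : (orthRoots Δ S).Nonempty) :
    S = ∅ := by
  refine Set.eq_empty_of_forall_notMem fun α hα ↦ Set.disjoint_left.1 hSΔ hα ?_
  have hsub : S ⊆ strongOrth Φ (orthRoots Δ S) := fun γ hγ ↦ ⟨hSΦ hγ, fun t ht ↦
    have hγt : ⟪γ, t⟫ = 0 := (real_inner_comm _ _).trans (ht.2 γ hγ)
    ⟨hγt, hstrong γ hγ t ht.1 hγt⟩⟩
  have hproper : orthRoots Δ S ∪ strongOrth Φ (orthRoots Δ S) ≠ Φ := fun h ↦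
    (strongOrth_eq_empty_of_union_eq hirr hne h).subset (hsub hα)
  rw [← hΔ.2.2 _ (isClosedSubRS_union_strongOrth hΦ (isClosedSubRS_orthRoots hΔ.1 hne)) hproper
    (subset_orthRoots_union_strongOrth hΦ hΔ.1 hrefl)]
  exact .inr (hsub hα)

/-- The family `Λ` takes the common value `Λs` on the short roots of `Φ` and the common value
`Λl ⊆ Λs` on the long roots. -/
structure HasCommonValues {Z : Type*} (Φ : Set V) (Λ : V → Set Z) (Λs Λl : Set Z) : Prop where
  eq_of_mem_shortSet : ∀ α ∈ shortSet Φ, Λ α = Λs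
  eq_of_mem_longSet : ∀ α ∈ longSet Φ, Λ α = Λl
  long_subset_short : Λl ⊆ Λs

namespace HasCommonValues

variable {Z : Type*} {Λ : V → Set Z} {Λs Λl : Set Z}

lemma long_subset (hΛ : HasCommonValues Φ Λ Λs Λl) (hΦ : IsRootSystem Φ) (hred : IsReduced Φ)
    {α : V} (hα : α ∈ Φ) : Λl ⊆ Λ α := by
  rcases hΦ.mem_shortSet_or_mem_longSet hred hα with h | h
  · exact hΛ.eq_of_mem_shortSet α h ▸ hΛ.long_subset_short
  · exact (hΛ.eq_of_mem_longSet α h).ge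

lemma eq_of_long_eq_short (hΛ : HasCommonValues Φ Λ Λs Λl) (hΦ : IsRootSystem Φ)
    (hred : IsReduced Φ) (heq : Λl = Λs) {α : V} (hα : α ∈ Φ) : Λ α = Λs :=
  (hΦ.mem_shortSet_or_mem_longSet hred hα).elim (hΛ.eq_of_mem_shortSet α)
    fun h ↦ (hΛ.eq_of_mem_longSet α h).trans heq

lemma apply_add_subset_union (hΛ : HasCommonValues Φ Λ Λs Λl) (hΦ : IsRootSystem Φ)
    (hred : IsReduced Φ) {α β : V} (hα : α ∈ Φ) (hβ : β ∈ Φ) (hαβ : α + β ∈ Φ) :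
    Λ (α + β) ⊆ Λ α ∪ Λ β := by
  rcases hΦ.mem_shortSet_or_mem_longSet hred hαβ with h | h
  · rw [hΛ.eq_of_mem_shortSet _ h]
    rcases hΦ.mem_shortSet_or_mem_longSet hred hα with hα | hα
    · exact Set.subset_union_of_subset_left (hΛ.eq_of_mem_shortSet α hα).ge _
    rcases hΦ.mem_shortSet_or_mem_longSet hred hβ with hβ | hβ
    · exact Set.subset_union_of_subset_right (hΛ.eq_of_mem_shortSet β hβ).ge _
    exact absurd h (hΦ.add_mem_longSet hred hα hβ hαβ).2
  · rw [hΛ.eq_of_mem_longSet _ h]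
    exact Set.subset_union_of_subset_left (hΛ.long_subset hΦ hred hα) _

end HasCommonValues

end RootSystem

section ExtensionDatum

variable {Φ : Set V} {Λ : V → Set Y}

namespace IsExtensionDatum

lemma zero_mem (hED : IsExtensionDatum Φ Λ) (hΦ : IsRootSystem Φ) (hred : IsReduced Φ) {α : V}
    (hα : α ∈ Φ) : 0 ∈ Λ α :=
  hED.2.2.1 α ((hΦ.ndSet_eq hred).ge hα)

protected lemma neg_mem (hED : IsExtensionDatum Φ Λ) (hΦ : IsRootSystem Φ) {α : V} (hα : α ∈ Φ)
    {y : Y} (hy : y ∈ Λ α) : -y ∈ Λ (-α) := by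
  have h := hED.1 α hα α hα y hy y hy
  rwa [reflRoot_self, pairing_self (hΦ.ne_zero hα), two_smul, sub_add_cancel_left] at h

protected lemma sub_mem (hED : IsExtensionDatum Φ Λ) (hΦ : IsRootSystem Φ) {α β : V} (hα : α ∈ Φ)
    (hβ : β ∈ Φ) (hne : α ≠ β) (hpos : 0 < ⟪α, β⟫) {w y : Y} (hw : w ∈ Λ α) (hy : y ∈ Λ β) :
    w - y ∈ Λ (α - β) := by
  rcases hΦ.pairing_eq_one_or_pairing_eq_one hα hβ hne hpos with h | h
  · simpa only [reflRoot, h, one_smul] using hED.1 β hβ α hα y hy w hw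
  · simpa only [reflRoot, h, one_smul, neg_sub] using
      hED.neg_mem hΦ (hΦ.reflRoot_mem hα hβ) (hED.1 α hα β hβ w hw y hy)

end IsExtensionDatum

lemma Gr_PhiRe (hED : IsExtensionDatum Φ Λ) (hΦ : IsRootSystem Φ) (hred : IsReduced Φ) {Δ : Set V}
    (hΔ : Δ ⊆ Φ) : Gr (PhiRe Δ Λ) = Δ :=
  Set.Subset.antisymm (fun _ ⟨_, hy⟩ ↦ hy.1) fun _ hα ↦ ⟨0, hα, hED.zero_mem hΦ hred (hΔ hα)⟩

lemma IsClosedSubRS.isClosedSubSys_PhiRe (hED : IsExtensionDatum Φ Λ) (hΦ : IsRootSystem Φ)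
    (hred : IsReduced Φ) {Δ : Set V} (hΔ : IsClosedSubRS Φ Δ) (hne : Δ ≠ Φ) :
    IsClosedSubSys (PhiRe Φ Λ) (PhiRe Δ Λ) := by
  obtain ⟨⟨⟨d, hd⟩, hsub, hrefl⟩, hadd⟩ := hΔ
  refine ⟨⟨⟨(d, 0), hd, hED.zero_mem hΦ hred (hsub hd)⟩, fun x hx ↦ ⟨hsub hx.1, hx.2⟩,
    fun h ↦ hne ?_, fun a ha x hx ↦
      ⟨hrefl _ ha.1 _ hx.1, hED.1 _ (hsub ha.1) _ (hsub hx.1) _ ha.2 _ hx.2⟩⟩,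
    fun x hx y hy hxy ↦ ⟨hadd _ hx.1 _ hy.1 hxy.1, hxy.2⟩⟩
  rw [← Gr_PhiRe hED hΦ hred hsub, h, Gr_PhiRe hED hΦ hred subset_rfl]

lemma IsMaxClosedSubSys.PhiRe_Gr (hED : IsExtensionDatum Φ Λ) (hΦ : IsRootSystem Φ)
    (hred : IsReduced Φ) {Ψ : Set (V × Y)} (hΨ : IsMaxClosedSubSys (PhiRe Φ Λ) Ψ)
    (hGr : IsClosedSubRS Φ (Gr Ψ)) (hne : Gr Ψ ≠ Φ) : PhiRe (Gr Ψ) Λ = Ψ :=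
  hΨ.2 _ (hGr.isClosedSubSys_PhiRe hED hΦ hred hne) fun x hx ↦ ⟨⟨x.2, hx⟩, (hΨ.1.1.2.1 hx).2⟩

lemma IsMaxClosedSubSys.isMaxClosedSubRS_Gr (hED : IsExtensionDatum Φ Λ) (hΦ : IsRootSystem Φ)
    (hred : IsReduced Φ) {Ψ : Set (V × Y)} (hΨ : IsMaxClosedSubSys (PhiRe Φ Λ) Ψ)
    (hGr : IsClosedSubRS Φ (Gr Ψ)) (hne : Gr Ψ ≠ Φ) : IsMaxClosedSubRS Φ (Gr Ψ) := by
  refine ⟨hGr, hne, fun Δ hΔ hΔne hsub ↦ ?_⟩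
  have h : PhiRe Δ Λ = Ψ := hΨ.2 _ (hΔ.isClosedSubSys_PhiRe hED hΦ hred hΔne) fun x hx ↦
    ⟨hsub ⟨x.2, hx⟩, (hΨ.1.1.2.1 hx).2⟩
  rw [← h, Gr_PhiRe hED hΦ hred hΔ.1.2.1]

lemma isClosedSubSys_PhiRe_const (hΦ : IsRootSystem Φ) (G : AddSubgroup Y)
    (hG : ∀ α ∈ Φ, (G : Set Y) ⊆ Λ α) (hne : ∃ α ∈ Φ, Λ α ≠ G) :
    IsClosedSubSys (PhiRe Φ Λ) (PhiRe Φ fun _ ↦ (G : Set Y)) := by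
  obtain ⟨α, hα, hαG⟩ := hne
  refine ⟨⟨⟨(α, 0), hα, G.zero_mem⟩, fun x hx ↦ ⟨hx.1, hG _ hx.1 hx.2⟩, fun h ↦ hαG ?_, ?_⟩,
    fun x hx y hy hxy ↦ ⟨hxy.1, G.add_mem hx.2 hy.2⟩⟩
  · exact Set.Subset.antisymm (fun y hy ↦ (h.ge (⟨hα, hy⟩ : (α, y) ∈ PhiRe Φ Λ)).2) (hG α hα)
  · rintro a ⟨ha, haG⟩ x ⟨hx, hxG⟩
    obtain ⟨m, hm⟩ := hΦ.2.2.2.2 _ ha _ hx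
    refine ⟨hΦ.reflRoot_mem ha hx, ?_⟩
    change x.2 - pairing x.1 a.1 • a.2 ∈ G
    rw [hm, Int.cast_smul_eq_zsmul]
    exact G.sub_mem hxG (G.zsmul_mem haG m)

variable {Λs Λl : Set Y}

lemma exists_addSubgroup_eq_of_isMaxClosedSubRS_longSet (hED : IsExtensionDatum Φ Λ)
    (hΛ : HasCommonValues Φ Λ Λs Λl) (hΦ : IsRootSystem Φ) (hred : IsReduced Φ)
    (hirr : IsIrreducible Φ) (hmax : IsMaxClosedSubRS Φ (longSet Φ))
    (hshort : (shortSet Φ).Nonempty) (hdim : Module.finrank ℝ V ≠ 2) :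
    ∃ G : AddSubgroup Y, Λl = G := by
  obtain ⟨α, hα, β, hβ, hne, hpos⟩ := exists_mem_longSet_inner_pos hΦ hred hirr hmax hshort hdim
  have hαβ : α - β ∈ longSet Φ := by
    have hmem := hΦ.sub_mem hα.1.1 hβ.1.1 hne hpos
    rw [sub_eq_add_neg] at hmem ⊢
    exact hΦ.add_mem_longSet hred hα (hΦ.neg_mem_longSet hred hβ) hmem
  have hzero : 0 ∈ Λl := hΛ.eq_of_mem_longSet α hα ▸ hED.zero_mem hΦ hred hα.1.1
  have hsub {w y : Y} (hw : w ∈ Λl) (hy : y ∈ Λl) : w - y ∈ Λl :=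
    hΛ.eq_of_mem_longSet _ hαβ ▸ hED.sub_mem hΦ hα.1.1 hβ.1.1 hne hpos
      (hΛ.eq_of_mem_longSet α hα ▸ hw) (hΛ.eq_of_mem_longSet β hβ ▸ hy)
  exact ⟨.ofSub Λl ⟨0, hzero⟩ fun {w} hw {y} hy ↦ sub_eq_add_neg w y ▸ hsub hw hy, rfl⟩

lemma IsMaxClosedSubSys.nonempty_Gr_inter_shortSet (hED : IsExtensionDatum Φ Λ)
    (hΛ : HasCommonValues Φ Λ Λs Λl) (hΦ : IsRootSystem Φ) (hred : IsReduced Φ)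
    (hirr : IsIrreducible Φ) (hshort : (shortSet Φ).Nonempty)
    (hmild : Module.finrank ℝ V = 2 → ∃ G : AddSubgroup Y, Λl = G)
    {Ψ : Set (V × Y)} (hΨ : IsMaxClosedSubSys (PhiRe Φ Λ) Ψ) (hGr : IsMaxClosedSubRS Φ (Gr Ψ))
    (hne : Λl ≠ Λs) : (Gr Ψ ∩ shortSet Φ).Nonempty := by
  by_contra! hempty
  obtain ⟨g, hg⟩ := hshort
  have hlong : Gr Ψ ⊆ longSet Φ := fun α hα ↦
    (hΦ.mem_shortSet_or_mem_longSet hred (hGr.1.1.2.1 hα)).resolve_left fun h ↦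
      hempty.subset ⟨hα, h⟩
  have hlongGr : longSet Φ = Gr Ψ :=
    hGr.2.2 _ (hΦ.isClosedSubRS_longSet hred (hGr.1.1.1.mono hlong))
      (fun h ↦ (h.ge hg.1.1).2 hg) hlong
  obtain ⟨G, hG⟩ : ∃ G : AddSubgroup Y, Λl = G := by
    by_cases hdim : Module.finrank ℝ V = 2
    · exact hmild hdim
    · exact exists_addSubgroup_eq_of_isMaxClosedSubRS_longSet hED hΛ hΦ hred hirr
        (hlongGr ▸ hGr) ⟨g, hg⟩ hdim
  have hclosed := isClosedSubSys_PhiRe_const hΦ G (fun α hα ↦ hG ▸ hΛ.long_subset hΦ hred hα)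
    ⟨g, hg.1.1, fun h ↦ hne (by rw [hG, ← h, hΛ.eq_of_mem_shortSet g hg])⟩
  have hΨG : PhiRe Φ (fun _ ↦ (G : Set Y)) = Ψ := hΨ.2 _ hclosed fun x hx ↦
    ⟨(hΨ.1.1.2.1 hx).1, by
      change x.2 ∈ (G : Set Y)
      rw [← hG, ← hΛ.eq_of_mem_longSet x.1 (hlong ⟨x.2, hx⟩)]
      exact (hΨ.1.1.2.1 hx).2⟩
  have hgΨ : (g, 0) ∈ Ψ := hΨG ▸ ⟨hg.1.1, G.zero_mem⟩
  exact hempty.subset ⟨⟨0, hgΨ⟩, hg⟩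

/-- The roots `α ∈ Φ` whose entire fibre `α ⊕ Λ α` is contained in `Ψ`, as opposed to
the gradient of `Ψ`, which asks for a nonempty part of the fibre. -/
def fullRoots (Φ : Set V) (Λ : V → Set Y) (Ψ : Set (V × Y)) : Set V :=
  {α ∈ Φ | ∀ w ∈ Λ α, (α, w) ∈ Ψ}

lemma isClosedSubRS_fullRoots (hED : IsExtensionDatum Φ Λ) (hΛ : HasCommonValues Φ Λ Λs Λl)
    (hΦ : IsRootSystem Φ) (hred : IsReduced Φ) {Ψ : Set (V × Y)}
    (hΨ : IsClosedSubSys (PhiRe Φ Λ) Ψ) (hne : (fullRoots Φ Λ Ψ).Nonempty) :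
    IsClosedSubRS Φ (fullRoots Φ Λ Ψ) := by
  have hzero {α : V} (hα : α ∈ fullRoots Φ Λ Ψ) : (α, 0) ∈ Ψ :=
    hα.2 0 (hED.zero_mem hΦ hred hα.1)
  refine ⟨⟨hne, fun α hα ↦ hα.1, fun α hα β hβ ↦ ?_⟩, fun α hα β hβ hαβ ↦ ⟨hαβ, fun w hw ↦ ?_⟩⟩
  · have hαβ := hΦ.reflRoot_mem hα.1 hβ.1
    refine ⟨hαβ, fun w hw ↦ ?_⟩
    have hwβ : w ∈ Λ β := by
      simpa using hED.1 α hα.1 _ hαβ 0 (hED.zero_mem hΦ hred hα.1) w hw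
    simpa [reflAff] using hΨ.1.2.2.2 _ (hzero hα) _ (hβ.2 w hwβ)
  · rcases hΛ.apply_add_subset_union hΦ hred hα.1 hβ.1 hαβ hw with h | h
    · have hsum : (α, w) + (β, 0) = (α + β, w) := by rw [Prod.mk_add_mk, add_zero]
      exact hsum ▸ hΨ.2 _ (hα.2 w h) _ (hzero hβ) (hsum ▸ ⟨hαβ, hw⟩)
    · have hsum : (α, 0) + (β, w) = (α + β, w) := by rw [Prod.mk_add_mk, zero_add]
      exact hsum ▸ hΨ.2 _ (hzero hα) _ (hβ.2 w h) (hsum ▸ ⟨hαβ, hw⟩)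

lemma IsMaxClosedSubRS.fullRoots_eq (hED : IsExtensionDatum Φ Λ) (hΛ : HasCommonValues Φ Λ Λs Λl)
    (hΦ : IsRootSystem Φ) (hred : IsReduced Φ) {Δ : Set V} (hΔ : IsMaxClosedSubRS Φ Δ)
    {Ψ : Set (V × Y)} (hΨ : IsClosedSubSys (PhiRe Φ Λ) Ψ) (hsub : PhiRe Δ Λ ⊆ Ψ) :
    fullRoots Φ Λ Ψ = Δ := by
  have hΔsub : Δ ⊆ fullRoots Φ Λ Ψ := fun α hα ↦ ⟨hΔ.1.1.2.1 hα, fun w hw ↦ hsub ⟨hα, hw⟩⟩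
  refine hΔ.2.2 _ (isClosedSubRS_fullRoots hED hΛ hΦ hred hΨ (hΔ.1.1.1.mono hΔsub)) (fun h ↦ ?_)
    hΔsub
  exact hΨ.1.2.2.1 (hΨ.1.2.1.antisymm fun x hx ↦ (h.ge hx.1).2 x.2 hx.2)

lemma IsExtensionDatum.sub_mem_of_mem_apply_add (hED : IsExtensionDatum Φ Λ)
    (hΛ : HasCommonValues Φ Λ Λs Λl) (hΦ : IsRootSystem Φ) (hred : IsReduced Φ) {α β : V}
    (hα : α ∈ Φ) (hβ : β ∈ Φ) (hαβ : α + β ∈ Φ) (h : 0 < ⟪α + β, α⟫ ∨ Λl = Λs) {w y : Y}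
    (hw : w ∈ Λ (α + β)) (hy : y ∈ Λ α) : w - y ∈ Λ β := by
  by_cases hpos : 0 < ⟪α + β, α⟫
  · have hne : α + β ≠ α := fun h ↦ hΦ.ne_zero hβ (add_eq_left.1 h)
    exact add_sub_cancel_left α β ▸ hED.sub_mem hΦ hαβ hα hne hpos hw hy
  · have hconst {γ : V} (hγ : γ ∈ Φ) : Λ γ = Λs :=
      hΛ.eq_of_long_eq_short hΦ hred (h.resolve_left hpos) hγ
    have hαpos := hΦ.inner_self_pos hα
    have hneg : 0 < ⟪-α, β⟫ := by
      rw [inner_add_left, real_inner_comm α β] at hpos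
      rw [inner_neg_left]
      linarith
    have hne : -α ≠ β := fun h ↦ hΦ.ne_zero hαβ (by rw [← h, add_neg_cancel])
    have hnα := hΦ.neg_mem hα
    rw [hconst hβ, ← hconst (hΦ.sub_mem hnα hβ hne hneg)]
    rw [hconst hαβ, ← hconst hnα] at hw
    rw [hconst hα, ← hconst hβ] at hy
    exact hED.sub_mem hΦ hnα hβ hne hneg hw hy

lemma add_mem_fullRoots (hED : IsExtensionDatum Φ Λ) (hΛ : HasCommonValues Φ Λ Λs Λl)
    (hΦ : IsRootSystem Φ) (hred : IsReduced Φ) {Ψ : Set (V × Y)}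
    (hΨ : IsClosedSubSys (PhiRe Φ Λ) Ψ) {α β : V} (hα : α ∈ Gr Ψ) (hβ : β ∈ fullRoots Φ Λ Ψ)
    (hαβ : α + β ∈ Φ) (h : 0 < ⟪α + β, α⟫ ∨ Λl = Λs) : α + β ∈ fullRoots Φ Λ Ψ := by
  obtain ⟨y, hy⟩ := hα
  obtain ⟨hαΦ, hyα⟩ := hΨ.1.2.1 hy
  refine ⟨hαβ, fun w hw ↦ ?_⟩
  have hwy := hED.sub_mem_of_mem_apply_add hΛ hΦ hred hαΦ hβ.1 hαβ h hw hyα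
  have hsum : (α, y) + (β, w - y) = (α + β, w) := by rw [Prod.mk_add_mk, add_sub_cancel]
  exact hsum ▸ hΨ.2 _ hy _ (hβ.2 _ hwy) (hsum ▸ ⟨hαβ, hw⟩)

lemma IsRootSystem.inner_nonneg_of_add_mem_imp (hΦ : IsRootSystem Φ) {α u : V} (hα : α ∈ Φ)
    (hu : u ∈ Φ) (hne : α ≠ -u) (h : α + u ∈ Φ → ⟪α + u, α⟫ ≤ 0 ∧ ⟪u, u⟫ ≤ ⟪α, α⟫) :
    0 ≤ ⟪α, u⟫ := by
  by_contra! hneg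
  have hmem := hΦ.add_mem hα hu hne hneg
  obtain ⟨hle, hlen⟩ := h hmem
  have hpos := hΦ.inner_self_pos hmem
  rw [real_inner_add_add_self] at hpos
  rw [inner_add_left, real_inner_comm α u] at hle
  linarith

lemma IsMaxClosedSubRS.inner_add_nonpos_of_mem_Gr_sdiff (hED : IsExtensionDatum Φ Λ)
    (hΛ : HasCommonValues Φ Λ Λs Λl) (hΦ : IsRootSystem Φ) (hred : IsReduced Φ) {Δ : Set V}
    (hΔ : IsMaxClosedSubRS Φ Δ) {Ψ : Set (V × Y)} (hΨ : IsClosedSubSys (PhiRe Φ Λ) Ψ)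
    (hsub : PhiRe Δ Λ ⊆ Ψ) {α β : V} (hα : α ∈ Gr Ψ \ Δ) (hβ : β ∈ Δ) (hαβ : α + β ∈ Φ) :
    ⟪α + β, α⟫ ≤ 0 ∧ Λl ≠ Λs := by
  have hfull := hΔ.fullRoots_eq hED hΛ hΦ hred hΨ hsub
  rw [← not_lt, ← not_or]
  intro h
  have hmem : α + β ∈ Δ := hfull ▸ add_mem_fullRoots hED hΛ hΦ hred hΨ hα.1 (hfull ▸ hβ) hαβ h
  have hα' := hΔ.1.2 _ hmem _ (hΔ.1.neg_mem hβ)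
  rw [add_neg_cancel_right] at hα'
  obtain ⟨y, hy⟩ := hα.1
  exact hα.2 (hα' (hΨ.1.2.1 hy).1)

lemma IsMaxClosedSubRS.orthRoots_Gr_sdiff_nonempty (hED : IsExtensionDatum Φ Λ)
    (hΛ : HasCommonValues Φ Λ Λs Λl) (hΦ : IsRootSystem Φ) (hred : IsReduced Φ)
    (hirr : IsIrreducible Φ) {Δ : Set V} (hΔ : IsMaxClosedSubRS Φ Δ)
    (hshort : Λl ≠ Λs → (Δ ∩ shortSet Φ).Nonempty) {Ψ : Set (V × Y)}
    (hΨ : IsClosedSubSys (PhiRe Φ Λ) Ψ) (hsub : PhiRe Δ Λ ⊆ Ψ) :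
    (orthRoots Δ (Gr Ψ \ Δ)).Nonempty := by
  obtain ⟨t, ht, hts⟩ : ∃ t ∈ Δ, Λl ≠ Λs → t ∈ shortSet Φ := by
    by_cases h : Λl = Λs
    · exact hΔ.1.1.1.imp fun d hd ↦ ⟨hd, fun hne ↦ absurd h hne⟩
    · exact (hshort h).imp fun d hd ↦ ⟨hd.1, fun _ ↦ hd.2⟩
  refine ⟨t, ht, fun α hα ↦ ?_⟩
  obtain ⟨y, hy⟩ := hα.1
  have hαΦ : α ∈ Φ := (hΨ.1.2.1 hy).1
  have hnonneg {u : V} (hu : u ∈ Δ) (hut : ⟪u, u⟫ = ⟪t, t⟫) : 0 ≤ ⟪α, u⟫ := by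
    refine hΦ.inner_nonneg_of_add_mem_imp hαΦ (hΔ.1.1.2.1 hu)
      (fun h ↦ hα.2 (h ▸ hΔ.1.neg_mem hu)) fun hαu ↦ ?_
    obtain ⟨hle, hne⟩ := hΔ.inner_add_nonpos_of_mem_Gr_sdiff hED hΛ hΦ hred hΨ hsub hα hu hαu
    exact ⟨hle, hut.trans_le (hΦ.inner_self_le_of_mem_shortSet hred hirr (hts hne) hαΦ)⟩
  have hneg := hnonneg (hΔ.1.neg_mem ht) (inner_neg_neg t t)
  rw [inner_neg_right, neg_nonneg] at hneg
  exact (real_inner_comm _ _).trans (hneg.antisymm (hnonneg ht rfl))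

lemma IsMaxClosedSubRS.Gr_subset_of_PhiRe_subset (hED : IsExtensionDatum Φ Λ)
    (hΛ : HasCommonValues Φ Λ Λs Λl) (hΦ : IsRootSystem Φ) (hred : IsReduced Φ)
    (hirr : IsIrreducible Φ) {Δ : Set V} (hΔ : IsMaxClosedSubRS Φ Δ)
    (hshort : Λl ≠ Λs → (Δ ∩ shortSet Φ).Nonempty) {Ψ : Set (V × Y)}
    (hΨ : IsClosedSubSys (PhiRe Φ Λ) Ψ) (hsub : PhiRe Δ Λ ⊆ Ψ) : Gr Ψ ⊆ Δ := by
  have hGrΦ : Gr Ψ \ Δ ⊆ Φ := fun α ⟨⟨_, hy⟩, _⟩ ↦ (hΨ.1.2.1 hy).1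
  have hrefl : ∀ β ∈ Δ, ∀ α ∈ Gr Ψ \ Δ, reflRoot β α ∈ Gr Ψ \ Δ := by
    rintro β hβ α ⟨⟨y, hy⟩, hα⟩
    have hβΨ : (β, 0) ∈ Ψ := hsub ⟨hβ, hED.zero_mem hΦ hred (hΔ.1.1.2.1 hβ)⟩
    exact ⟨⟨_, hΨ.1.2.2.2 _ hβΨ _ hy⟩, fun h ↦ hα (reflRoot_reflRoot β α ▸ hΔ.1.1.2.2 β hβ _ h)⟩
  have hstrong : ∀ α ∈ Gr Ψ \ Δ, ∀ β ∈ Δ, ⟪α, β⟫ = 0 → α + β ∉ Φ := by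
    intro α hα β hβ horth hαβ
    have h := (hΔ.inner_add_nonpos_of_mem_Gr_sdiff hED hΛ hΦ hred hΨ hsub hα hβ hαβ).1
    rw [inner_add_left, real_inner_comm α β, horth, add_zero] at h
    exact h.not_gt (hΦ.inner_self_pos (hGrΦ hα))
  exact Set.sdiff_eq_empty.1 <| hΔ.eq_empty_of_forall_reflRoot_mem hΦ hirr hGrΦ
    Set.disjoint_sdiff_left hrefl hstrong
    (hΔ.orthRoots_Gr_sdiff_nonempty hED hΛ hΦ hred hirr hshort hΨ hsub)

lemma IsMaxClosedSubRS.isMaxClosedSubSys_PhiRe (hED : IsExtensionDatum Φ Λ)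
    (hΛ : HasCommonValues Φ Λ Λs Λl) (hΦ : IsRootSystem Φ) (hred : IsReduced Φ)
    (hirr : IsIrreducible Φ) {Δ : Set V} (hΔ : IsMaxClosedSubRS Φ Δ)
    (hshort : Λl ≠ Λs → (Δ ∩ shortSet Φ).Nonempty) :
    IsMaxClosedSubSys (PhiRe Φ Λ) (PhiRe Δ Λ) := by
  refine ⟨hΔ.1.isClosedSubSys_PhiRe hED hΦ hred hΔ.2.1, fun Ψ hΨ hsub ↦ hsub.antisymm' ?_⟩
  exact fun x hx ↦
    ⟨hΔ.Gr_subset_of_PhiRe_subset hED hΛ hΦ hred hirr hshort hΨ hsub ⟨x.2, hx⟩, (hΨ.1.2.1 hx).2⟩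

end ExtensionDatum

theorem statement15_general {V Y : Type*} [NormedAddCommGroup V] [InnerProductSpace ℝ V]
    [AddCommGroup Y] [Module ℝ Y]
    (Φ : Set V) (hΦ : IsRootSystem Φ) (hred : IsReduced Φ) (hirr : IsIrreducible Φ)
    (Λ : V → Set Y) (Λs Λl : Set Y) (hED : IsExtensionDatum Φ Λ)
    (hs : ∀ α ∈ shortSet Φ, Λ α = Λs) (hl : ∀ α ∈ longSet Φ, Λ α = Λl)
    (hls : Λl ⊆ Λs)
    (hone : shortSet Φ = ∅ → Λl = Λs)
    (hmild : Module.finrank ℝ V = 2 ∧ (shortSet Φ).Nonempty →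
      ∃ G : AddSubgroup Y, Λl = (G : Set Y))
    (Ψ : Set (V × Y)) :
    (IsMaxClosedSubSys (PhiRe Φ Λ) Ψ ∧ IsClosedSubRS Φ (Gr Ψ) ∧ Gr Ψ ≠ Φ) ↔
      ∃ Δ : Set V, IsMaxClosedSubRS Φ Δ ∧
        (Λl ≠ Λs → (Δ ∩ shortSet Φ).Nonempty) ∧
        Ψ = {x | x.1 ∈ Δ ∧ x.2 ∈ Λ x.1} := by
  have hΛ : HasCommonValues Φ Λ Λs Λl := ⟨hs, hl, hls⟩
  constructor
  · rintro ⟨hΨ, hGr, hne⟩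
    have hmax := hΨ.isMaxClosedSubRS_Gr hED hΦ hred hGr hne
    refine ⟨Gr Ψ, hmax, fun hΛne ↦ ?_, (hΨ.PhiRe_Gr hED hΦ hred hGr hne).symm⟩
    have hshort : (shortSet Φ).Nonempty :=
      Set.nonempty_iff_ne_empty.2 fun h ↦ hΛne (hone h)
    exact hΨ.nonempty_Gr_inter_shortSet hED hΛ hΦ hred hirr hshort
      (fun hdim ↦ hmild ⟨hdim, hshort⟩) hmax hΛne
  · rintro ⟨Δ, hΔ, hshort, rfl⟩
    refine ⟨hΔ.isMaxClosedSubSys_PhiRe hED hΛ hΦ hred hirr hshort, ?_⟩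
    change IsClosedSubRS Φ (Gr (PhiRe Δ Λ)) ∧ Gr (PhiRe Δ Λ) ≠ Φ
    rw [Gr_PhiRe hED hΦ hred hΔ.1.1.2.1]
    exact ⟨hΔ.1, hΔ.2.1⟩

/-- Theorem 6.1: maximal closed subroot systems with proper closed gradient. -/
theorem statement15 {V Y : Type*} [NormedAddCommGroup V] [InnerProductSpace ℝ V]
    [FiniteDimensional ℝ V] [AddCommGroup Y] [Module ℝ Y] [FiniteDimensional ℝ Y]
    (Φ : Set V) (hΦ : IsRootSystem Φ) (hred : IsReduced Φ) (hirr : IsIrreducible Φ)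
    (Λ : V → Set Y) (Λs Λl : Set Y) (hED : IsExtensionDatum Φ Λ)
    (hs : ∀ α ∈ shortSet Φ, Λ α = Λs) (hl : ∀ α ∈ longSet Φ, Λ α = Λl)
    (hls : Λl ⊆ Λs)
    (hone : shortSet Φ = ∅ → Λl = Λs)
    (hmild : Module.finrank ℝ V = 2 ∧ (shortSet Φ).Nonempty →
      ∃ G : AddSubgroup Y, Λl = (G : Set Y))
    (Ψ : Set (V × Y)) :
    (IsMaxClosedSubSys (PhiRe Φ Λ) Ψ ∧ IsClosedSubRS Φ (Gr Ψ) ∧ Gr Ψ ≠ Φ) ↔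
      ∃ Δ : Set V, IsMaxClosedSubRS Φ Δ ∧
        (Λl ≠ Λs → (Δ ∩ shortSet Φ).Nonempty) ∧
        Ψ = {x | x.1 ∈ Δ ∧ x.2 ∈ Λ x.1} :=
  statement15_general Φ hΦ hred hirr Λ Λs Λl hED hs hl hls hone hmild Ψ

end BdS

end
end

section
/- Let q be a prime number and k ≥ 1. The map sending a matrix U to the subgroup of ℤᵏ generated by the rows of U is a bijection from the set 𝐇_q of k×k integer matrices in Hermite normal form with determinant q onto the set 𝐌_q of subgroups of ℤᵏ of index q. In particular, |𝐌_q| = |𝐇_q| = (qᵏ − 1)/(q − 1), and the subgroups of index q are exactly the maximal proper subgroups H of ℤᵏ with ℤᵏ/H of order q. -/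
open scoped RealInnerProductSpace Pointwise

noncomputable section

namespace BdS

variable {V Y : Type*} [NormedAddCommGroup V] [InnerProductSpace ℝ V]
variable [AddCommGroup Y] [Module ℝ Y]

/-- a square integer matrix in Hermite normal form. -/
def IsHNF {k : ℕ} (A : Matrix (Fin k) (Fin k) ℤ) : Prop :=
  (∀ i j : Fin k, j < i → A i j = 0) ∧ (∀ j : Fin k, 0 < A j j) ∧
    ∀ i j : Fin k, i < j → 0 ≤ A i j ∧ A i j < A j j

/-- the subgroup of `ℤᵏ` generated by the rows of `A`. -/
def rowSpan {k : ℕ} (A : Matrix (Fin k) (Fin k) ℤ) : AddSubgroup (Fin k → ℤ) :=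
  AddSubgroup.closure (Set.range fun i => A i)

/-!
For a subgroup `H` of finite index in `ℤᵏ` and a position `j`, the entries `v j` of the vectors
`v ∈ H` that vanish before `j` form a nonzero subgroup of `ℤ`; let `d j` be its positive generator.
Division with remainder brings every vector, modulo `H`, into the box `∏ [0, d j)`, and a vector of
`H` whose entries satisfy `|v j| < d j` is zero. The first fact produces a Hermite normal form with
diagonal `d` whose rows generate `H`, the second shows that it is unique, and its determinant
`∏ d j` is the index of `H`. Since column `j` has `j` entries above the diagonal, each with `d j`
possible values, the subgroups of index `n` number `∑ ∏ d jʲ` over the factorizations `∏ d j = n`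
(with `j` counted from `0`). For a prime this is a geometric sum.
-/

section RowSpan

open scoped Matrix

lemma vecMul_apply_of_forall_lt {ι R : Type*} [Fintype ι] [LinearOrder ι]
    [NonUnitalNonAssocSemiring R] {A : Matrix ι ι R} (hA : A.IsUpperTriangular) {x : ι → R} {i : ι}
    (hx : ∀ l < i, x l = 0) : (x ᵥ* A) i = x i * A i i := by
  refine Fintype.sum_eq_single i fun l hl => ?_
  rcases lt_or_gt_of_ne hl with h | h
  · rw [hx l h, zero_mul]
  · simp [hA h]

variable {k : ℕ} {A : Matrix (Fin k) (Fin k) ℤ}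

lemma mem_rowSpan_iff {x : Fin k → ℤ} : x ∈ rowSpan A ↔ ∃ c : Fin k → ℤ, c ᵥ* A = x := by
  rw [rowSpan, ← Submodule.span_int_eq_addSubgroupClosure, Submodule.mem_toAddSubgroup,
    Submodule.mem_span_range_iff_exists_fun]
  simp only [Matrix.vecMul_eq_sum]

lemma row_mem_rowSpan (A : Matrix (Fin k) (Fin k) ℤ) (i : Fin k) : A i ∈ rowSpan A :=
  AddSubgroup.subset_closure ⟨i, rfl⟩

lemma rowSpan_le_iff {H : AddSubgroup (Fin k → ℤ)} : rowSpan A ≤ H ↔ ∀ i, A i ∈ H := by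
  rw [rowSpan, AddSubgroup.closure_le, Set.range_subset_iff]
  rfl

lemma index_rowSpan (hA : A.det ≠ 0) : (rowSpan A).index = A.det.natAbs := by
  have hspan : rowSpan A = (Submodule.span ℤ (Set.range A.row)).toAddSubgroup :=
    (Submodule.span_int_eq_addSubgroupClosure _).symm
  rw [hspan, AddSubgroup.index_eq_natAbs_det (Pi.basisFun ℤ (Fin k)) _
    (Module.Basis.span (Matrix.linearIndependent_rows_of_det_ne_zero hA)), ← Matrix.det_transpose A,
    Module.Basis.det_apply]
  congr 2
  ext i j
  exact congrFun (Module.Basis.coe_span_apply _ j) i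

end RowSpan

section LeadingCoeffs

variable {k : ℕ} {H : AddSubgroup (Fin k → ℤ)} {d : Fin k → ℤ}

/-- The leading coefficients of `H` in position `j`: the entries `v j` of the vectors `v ∈ H` whose
entries before `j` vanish. The diagonal of a Hermite normal form of `H` consists of their positive
generators. -/
def leadingCoeffs (H : AddSubgroup (Fin k → ℤ)) (j : Fin k) : AddSubgroup ℤ :=
  (H ⊓ ⨅ i : Set.Iio j, (Pi.evalAddMonoidHom _ i.1).ker).map (Pi.evalAddMonoidHom _ j)

lemma mem_leadingCoeffs {j : Fin k} {c : ℤ} :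
    c ∈ leadingCoeffs H j ↔ ∃ v ∈ H, (∀ i < j, v i = 0) ∧ v j = c := by
  simp [leadingCoeffs, AddSubgroup.mem_iInf, and_assoc]

lemma index_mem_leadingCoeffs (H : AddSubgroup (Fin k → ℤ)) (j : Fin k) :
    (H.index : ℤ) ∈ leadingCoeffs H j :=
  mem_leadingCoeffs.2 ⟨_, H.nsmul_index_mem (Pi.single j 1), fun i hi => by simp [hi.ne], by simp⟩

lemma exists_pos_leadingCoeffs_eq_zmultiples (hH : H.index ≠ 0) (j : Fin k) :
    ∃ d : ℤ, 0 < d ∧ leadingCoeffs H j = AddSubgroup.zmultiples d := by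
  obtain ⟨a, ha⟩ := Int.subgroup_cyclic (leadingCoeffs H j)
  rw [← AddSubgroup.zmultiples_eq_closure] at ha
  have hdvd : a ∣ H.index := Int.mem_zmultiples_iff.1 (ha ▸ index_mem_leadingCoeffs H j)
  have ha0 : a ≠ 0 := ne_zero_of_dvd_ne_zero (by exact_mod_cast hH) hdvd
  exact ⟨a.natAbs, by positivity, by rw [ha, Int.zmultiples_natAbs]⟩

/-- Division with remainder, one coordinate after the other: subtracting a multiple of a vector
with leading entry `d j` in position `j` leaves the earlier coordinates alone. -/
lemma exists_sub_mem_forall_mem_Ico (hd : ∀ j, 0 < d j) (hH : ∀ j, d j ∈ leadingCoeffs H j)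
    (w : Fin k → ℤ) : ∃ r, w - r ∈ H ∧ ∀ j, r j ∈ Set.Ico 0 (d j) := by
  suffices h : ∀ m ≤ k, ∃ r, w - r ∈ H ∧ ∀ j : Fin k, j.1 < m → r j ∈ Set.Ico 0 (d j) by
    obtain ⟨r, hr, hr'⟩ := h k le_rfl
    exact ⟨r, hr, fun j => hr' j j.2⟩
  intro m hm
  induction m with
  | zero => exact ⟨w, by simp, by simp⟩
  | succ m ih =>
    obtain ⟨r, hr, hr'⟩ := ih (by lia)
    obtain ⟨v, hv, hv0, hvm⟩ := mem_leadingCoeffs.1 (hH ⟨m, hm⟩)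
    refine ⟨r - (r ⟨m, hm⟩ / d ⟨m, hm⟩) • v, ?_, fun j hj => ?_⟩
    · rw [← sub_add]
      exact H.add_mem hr (H.zsmul_mem hv _)
    · rcases Nat.lt_succ_iff_lt_or_eq.1 hj with hlt | rfl
      · rw [Pi.sub_apply, Pi.smul_apply, hv0 j hlt, smul_zero, sub_zero]
        exact hr' j hlt
      · have hrem : (r - (r j / d j) • v) j = r j % d j := by
          rw [Pi.sub_apply, Pi.smul_apply, hvm, smul_eq_mul, Int.emod_def, mul_comm]
        rw [hrem]
        exact ⟨Int.emod_nonneg _ (hd j).ne', Int.emod_lt_of_pos _ (hd j)⟩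

lemma apply_eq_zero_of_mem_of_abs_lt (hH : ∀ j, leadingCoeffs H j ≤ AddSubgroup.zmultiples (d j))
    {v : Fin k → ℤ} (hv : v ∈ H) {j : Fin k} (hlt : ∀ i ≤ j, |v i| < d i) : v j = 0 := by
  induction j using WellFoundedLT.induction with
  | ind j ih =>
    have hinit : ∀ i < j, v i = 0 := fun i hi => ih i hi fun l hl => hlt l (hl.trans hi.le)
    have hdvd : d j ∣ v j :=
      Int.mem_zmultiples_iff.1 (hH j (mem_leadingCoeffs.2 ⟨v, hv, hinit, rfl⟩))
    exact Int.eq_zero_of_abs_lt_dvd hdvd (hlt j le_rfl)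

lemma leadingCoeffs_rowSpan {A : Matrix (Fin k) (Fin k) ℤ} (hA : A.IsUpperTriangular)
    (hdiag : ∀ i, A i i ≠ 0) (j : Fin k) :
    leadingCoeffs (rowSpan A) j = AddSubgroup.zmultiples (A j j) := by
  ext c
  rw [Int.mem_zmultiples_iff, mem_leadingCoeffs]
  constructor
  · rintro ⟨v, hv, hv0, rfl⟩
    obtain ⟨x, rfl⟩ := mem_rowSpan_iff.1 hv
    have hx : ∀ i < j, x i = 0 := fun i => by
      induction i using WellFoundedLT.induction with
      | ind i ih =>
        intro hi
        have hxi := vecMul_apply_of_forall_lt hA fun l hl => ih l hl (hl.trans hi)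
        rw [hv0 i hi, zero_eq_mul] at hxi
        exact hxi.resolve_right (hdiag i)
    rw [vecMul_apply_of_forall_lt hA hx]
    exact dvd_mul_left _ _
  · rintro ⟨t, rfl⟩
    refine ⟨t • A j, (rowSpan A).zsmul_mem (row_mem_rowSpan A j) t, fun i hi => ?_, ?_⟩
    · rw [Pi.smul_apply, hA hi, smul_zero]
    · rw [Pi.smul_apply, smul_eq_mul, mul_comm]

end LeadingCoeffs

section HermiteNormalForm

variable {k : ℕ}

namespace IsHNF

variable {A B : Matrix (Fin k) (Fin k) ℤ}

lemma isUpperTriangular (hA : IsHNF A) : A.IsUpperTriangular := fun _ _ hij => hA.1 _ _ hij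

lemma diag_pos (hA : IsHNF A) (j : Fin k) : 0 < A j j := hA.2.1 j

lemma det_eq_prod_diag (hA : IsHNF A) : A.det = ∏ j, A j j :=
  Matrix.det_of_isUpperTriangular hA.isUpperTriangular

lemma det_pos (hA : IsHNF A) : 0 < A.det :=
  hA.det_eq_prod_diag ▸ Finset.prod_pos fun j _ => hA.diag_pos j

lemma leadingCoeffs_rowSpan (hA : IsHNF A) (j : Fin k) :
    leadingCoeffs (rowSpan A) j = AddSubgroup.zmultiples (A j j) :=
  BdS.leadingCoeffs_rowSpan hA.isUpperTriangular (fun i => (hA.diag_pos i).ne') j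

lemma abs_sub_apply_lt (hA : IsHNF A) (hB : IsHNF B) (hdiag : ∀ j, A j j = B j j) (i j : Fin k) :
    |A i j - B i j| < A j j := by
  rcases lt_trichotomy i j with hij | rfl | hij
  · obtain ⟨hA0, hAlt⟩ := hA.2.2 i j hij
    obtain ⟨hB0, hBlt⟩ := hB.2.2 i j hij
    rw [← hdiag j] at hBlt
    exact abs_sub_lt_of_nonneg_of_lt hA0 hAlt hB0 hBlt
  · simpa [hdiag] using hB.diag_pos i
  · simpa [hA.1 i j hij, hB.1 i j hij] using hA.diag_pos j

lemma eq_of_rowSpan_eq (hA : IsHNF A) (hB : IsHNF B) (h : rowSpan A = rowSpan B) : A = B := by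
  have hdiag : ∀ j, A j j = B j j := fun j => by
    rw [← Int.natAbs_inj_of_nonneg_of_nonneg (hA.diag_pos j).le (hB.diag_pos j).le,
      ← Int.index_zmultiples, ← Int.index_zmultiples, ← hA.leadingCoeffs_rowSpan, h,
      hB.leadingCoeffs_rowSpan]
  ext i j
  have hmem : A i - B i ∈ rowSpan A :=
    sub_mem (row_mem_rowSpan A i) (h ▸ row_mem_rowSpan B i)
  exact sub_eq_zero.1 <|
    apply_eq_zero_of_mem_of_abs_lt (fun l => (hA.leadingCoeffs_rowSpan l).le) hmem
      fun l _ => hA.abs_sub_apply_lt hB hdiag i l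

end IsHNF

/-- Subtracting the leading entry before reducing makes the reduced vector vanish up to position
`i`, so that adding it back produces the `i`-th row of a Hermite normal form. -/
lemma exists_mem_reduced_row {H : AddSubgroup (Fin k → ℤ)} {d : Fin k → ℤ} (hd : ∀ j, 0 < d j)
    (hH : ∀ j, leadingCoeffs H j = AddSubgroup.zmultiples (d j)) (i : Fin k) :
    ∃ v ∈ H, (∀ j < i, v j = 0) ∧ v i = d i ∧ ∀ j, i < j → v j ∈ Set.Ico 0 (d j) := by
  have hgen : ∀ j, d j ∈ leadingCoeffs H j := fun j => hH j ▸ AddSubgroup.mem_zmultiples _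
  obtain ⟨v, hv, hv0, hvi⟩ := mem_leadingCoeffs.1 (hgen i)
  obtain ⟨r, hr, hrd⟩ := exists_sub_mem_forall_mem_Ico hd hgen (v - Pi.single i (d i))
  have htail : ∀ j ≤ i, (v - Pi.single i (d i) : Fin k → ℤ) j = 0 := fun j hj => by
    rcases hj.lt_or_eq with hlt | rfl
    · simp [hv0 j hlt, hlt.ne]
    · simp [hvi]
  have hr0 : ∀ j ≤ i, r j = 0 := fun j hj => by
    have hzero := apply_eq_zero_of_mem_of_abs_lt (fun l => (hH l).le) hr (j := j) fun l hl => by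
      rw [Pi.sub_apply, htail l (hl.trans hj), zero_sub, abs_neg, abs_of_nonneg (hrd l).1]
      exact (hrd l).2
    rwa [Pi.sub_apply, htail j hj, zero_sub, neg_eq_zero] at hzero
  refine ⟨r + Pi.single i (d i), ?_, fun j hj => ?_, ?_, fun j hj => ?_⟩
  · have hsub : v - (v - Pi.single i (d i) - r) ∈ H := H.sub_mem hv hr
    rwa [sub_sub_eq_add_sub, add_comm, add_sub_assoc, sub_sub_cancel] at hsub
  · simp [hr0 j hj.le, hj.ne]
  · simp [hr0 i le_rfl]
  · simpa [hj.ne'] using hrd j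

theorem exists_isHNF_rowSpan_eq {H : AddSubgroup (Fin k → ℤ)} (hH : H.index ≠ 0) :
    ∃ A, IsHNF A ∧ rowSpan A = H := by
  choose d hd hgen using exists_pos_leadingCoeffs_eq_zmultiples hH
  choose A hmem hzero hdiag hred using exists_mem_reduced_row hd hgen
  refine ⟨A, ⟨fun i j hij => hzero i j hij, fun j => hdiag j ▸ hd j,
    fun i j hij => hdiag j ▸ hred i j hij⟩, ?_⟩
  refine le_antisymm (rowSpan_le_iff.2 hmem) fun v hv => ?_
  have hlead : ∀ j, d j ∈ leadingCoeffs (rowSpan A) j := fun j =>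
    mem_leadingCoeffs.2 ⟨A j, row_mem_rowSpan A j, hzero j, hdiag j⟩
  obtain ⟨r, hr, hrd⟩ := exists_sub_mem_forall_mem_Ico hd hlead v
  have hrH : r ∈ H := by
    simpa using H.sub_mem hv (rowSpan_le_iff.2 hmem hr)
  have hr0 : r = 0 := funext fun j =>
    apply_eq_zero_of_mem_of_abs_lt (fun i => (hgen i).le) hrH
      fun i _ => (abs_of_nonneg (hrd i).1).trans_lt (hrd i).2
  simpa [hr0] using hr

theorem bijOn_rowSpan_isHNF_det_eq {n : ℕ} (hn : n ≠ 0) :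
    Set.BijOn rowSpan {A : Matrix (Fin k) (Fin k) ℤ | IsHNF A ∧ A.det = n}
      {H : AddSubgroup (Fin k → ℤ) | H.index = n} := by
  refine ⟨?_, fun A hA B hB h => hA.1.eq_of_rowSpan_eq hB.1 h, ?_⟩
  · rintro A ⟨hA, hdet⟩
    rw [Set.mem_ofPred_eq, index_rowSpan hA.det_pos.ne', hdet, Int.natAbs_natCast]
  · rintro H rfl
    obtain ⟨A, hA, rfl⟩ := exists_isHNF_rowSpan_eq hn
    refine ⟨A, ⟨hA, ?_⟩, rfl⟩
    rw [index_rowSpan hA.det_pos.ne', Int.natAbs_of_nonneg hA.det_pos.le]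

end HermiteNormalForm

section Counting

variable {k : ℕ}

/-- The matrices in Hermite normal form with diagonal `d`, for positive `d`, described by the
range of each entry. -/
def hnfWithDiag (d : Fin k → ℕ) : Finset (Matrix (Fin k) (Fin k) ℤ) :=
  (Fintype.piFinset fun i => Fintype.piFinset fun j =>
    if i < j then Finset.Ico 0 (d j : ℤ) else if i = j then {(d j : ℤ)} else {0}).map
      Matrix.of.toEmbedding

lemma apply_self_of_mem_hnfWithDiag {d : Fin k → ℕ} {A : Matrix (Fin k) (Fin k) ℤ}
    (hA : A ∈ hnfWithDiag d) (j : Fin k) : A j j = d j := by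
  simp only [hnfWithDiag, Finset.mem_map_equiv, Fintype.mem_piFinset, Matrix.of_symm_apply] at hA
  simpa using hA j j

lemma disjoint_hnfWithDiag {d e : Fin k → ℕ} (hne : d ≠ e) :
    Disjoint (hnfWithDiag d) (hnfWithDiag e) := by
  refine Finset.disjoint_left.2 fun A hd he => hne (funext fun j => ?_)
  exact_mod_cast (apply_self_of_mem_hnfWithDiag hd j).symm.trans
    (apply_self_of_mem_hnfWithDiag he j)

lemma mem_hnfWithDiag {d : Fin k → ℕ} (hd : ∀ j, 0 < d j) {A : Matrix (Fin k) (Fin k) ℤ} :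
    A ∈ hnfWithDiag d ↔ IsHNF A ∧ ∀ j, A j j = d j := by
  constructor
  · intro h
    have hdiag := apply_self_of_mem_hnfWithDiag h
    simp only [hnfWithDiag, Finset.mem_map_equiv, Fintype.mem_piFinset, Matrix.of_symm_apply] at h
    refine ⟨⟨fun i j hij => ?_, fun j => ?_, fun i j hij => ?_⟩, hdiag⟩
    · simpa [hij.not_gt, hij.ne'] using h i j
    · simpa [hdiag] using hd j
    · simpa [hij, hdiag] using h i j
  · rintro ⟨hA, hdiag⟩
    simp only [hnfWithDiag, Finset.mem_map_equiv, Fintype.mem_piFinset, Matrix.of_symm_apply]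
    intro i j
    rcases lt_trichotomy i j with hij | rfl | hij
    · simpa [hij, ← hdiag] using hA.2.2 i j hij
    · simp [hdiag]
    · simp [hij.not_gt, hij.ne', hA.1 i j hij]

lemma card_hnfWithDiag (d : Fin k → ℕ) : (hnfWithDiag d).card = ∏ j, d j ^ (j : ℕ) := by
  have hcard : ∀ i j : Fin k, (if i < j then Finset.Ico 0 (d j : ℤ)
      else if i = j then {(d j : ℤ)} else {0}).card = if i < j then d j else 1 := fun i j => by
    split_ifs <;> simp
  rw [hnfWithDiag, Finset.card_map, Fintype.card_piFinset]
  simp only [Fintype.card_piFinset, hcard]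
  rw [Finset.prod_comm]
  refine Finset.prod_congr rfl fun j _ => ?_
  rw [Finset.prod_ite, Finset.prod_const, Finset.prod_const_one, mul_one,
    Finset.filter_gt_eq_Iio, Fin.card_Iio]

lemma setOf_isHNF_det_eq_biUnion_hnfWithDiag (n : ℕ) :
    {A : Matrix (Fin k) (Fin k) ℤ | IsHNF A ∧ A.det = n} =
      (Nat.finMulAntidiag k n).biUnion hnfWithDiag := by
  have hpos : ∀ d ∈ Nat.finMulAntidiag k n, ∀ j, 0 < d j := fun d hd j =>
    Nat.pos_of_ne_zero (Nat.ne_zero_of_mem_finMulAntidiag hd j)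
  ext A
  simp only [Set.mem_ofPred_eq, Finset.coe_biUnion, Set.mem_iUnion, Finset.mem_coe]
  constructor
  · rintro ⟨hA, hdet⟩
    have hdiag : ∀ j, A j j = (A j j).toNat := fun j =>
      (Int.toNat_of_nonneg (hA.diag_pos j).le).symm
    have hd : (fun j => (A j j).toNat) ∈ Nat.finMulAntidiag k n := by
      refine Nat.mem_finMulAntidiag.2 ⟨?_, ?_⟩
      · zify
        simp only [← hdiag, ← hdet, hA.det_eq_prod_diag]
      · rintro rfl
        exact hA.det_pos.ne' hdet
    exact ⟨_, hd, (mem_hnfWithDiag (hpos _ hd)).2 ⟨hA, hdiag⟩⟩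
  · rintro ⟨d, hd, hAd⟩
    obtain ⟨hA, hdiag⟩ := (mem_hnfWithDiag (hpos d hd)).1 hAd
    refine ⟨hA, ?_⟩
    rw [hA.det_eq_prod_diag, ← Nat.prod_eq_of_mem_finMulAntidiag hd, Nat.cast_prod]
    exact Finset.prod_congr rfl fun j _ => hdiag j

theorem ncard_isHNF_det_eq (n : ℕ) :
    {A : Matrix (Fin k) (Fin k) ℤ | IsHNF A ∧ A.det = n}.ncard =
      ∑ d ∈ Nat.finMulAntidiag k n, ∏ j, d j ^ (j : ℕ) := by
  rw [setOf_isHNF_det_eq_biUnion_hnfWithDiag, Set.ncard_coe_finset,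
    Finset.card_biUnion fun _ _ _ _ hne => disjoint_hnfWithDiag hne]
  simp only [card_hnfWithDiag]

lemma finMulAntidiag_prime {p : ℕ} (hp : p.Prime) :
    Nat.finMulAntidiag k p = Finset.univ.image fun m : Fin k => Pi.mulSingle m p := by
  ext f
  simp only [Nat.mem_finMulAntidiag, Finset.mem_image, Finset.mem_univ, true_and]
  constructor
  · rintro ⟨hf, -⟩
    obtain ⟨m, -, hm⟩ := (hp.prime.dvd_finsetProd_iff f).1 hf.symm.dvd
    have hfm : f m = p := Nat.dvd_antisymm (hf ▸ Finset.dvd_prod_of_mem f (Finset.mem_univ m)) hm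
    have hrest : ∏ i ∈ Finset.univ.erase m, f i = 1 := by
      refine Nat.eq_of_mul_eq_mul_left hp.pos ?_
      rw [mul_one, ← hfm, Finset.mul_prod_erase _ _ (Finset.mem_univ m), hf, hfm]
    refine ⟨m, funext fun i => ?_⟩
    rcases eq_or_ne i m with rfl | hi
    · rw [Pi.mulSingle_eq_same, hfm]
    · rw [Pi.mulSingle_eq_of_ne hi]
      exact (Finset.prod_eq_one_iff.1 hrest i (by simp [hi])).symm
  · rintro ⟨m, rfl⟩
    exact ⟨by simp, hp.ne_zero⟩

lemma sum_finMulAntidiag_prime {p : ℕ} (hp : p.Prime) :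
    ∑ d ∈ Nat.finMulAntidiag k p, ∏ j, d j ^ (j : ℕ) = (p ^ k - 1) / (p - 1) := by
  have hinj : Function.Injective fun m : Fin k => (Pi.mulSingle m p : Fin k → ℕ) := fun m l h => by
    by_contra hml
    have hm : (Pi.mulSingle m p : Fin k → ℕ) m = (Pi.mulSingle l p : Fin k → ℕ) m :=
      congrFun h m
    rw [Pi.mulSingle_eq_same, Pi.mulSingle_eq_of_ne hml] at hm
    exact hp.ne_one hm
  rw [finMulAntidiag_prime hp, Finset.sum_image hinj.injOn, ← Nat.geomSum_eq hp.two_le,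
    ← Fin.sum_univ_eq_sum_range (fun m => p ^ m)]
  refine Finset.sum_congr rfl fun m _ => ?_
  rw [Finset.prod_eq_single m (fun j _ hj => by simp [hj]) (by simp), Pi.mulSingle_eq_same]

end Counting

lemma isCoatom_of_index_prime {G : Type*} [AddGroup G] {H : AddSubgroup G} (hH : H.index.Prime) :
    IsCoatom H := by
  refine ⟨fun h => hH.ne_one (AddSubgroup.index_eq_one.2 h), fun K hK => ?_⟩
  rcases hH.eq_one_or_self_of_dvd _ (AddSubgroup.index_dvd_of_le hK.le) with h | h
  · exact AddSubgroup.index_eq_one.1 h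
  · have hrel : H.relIndex K = 1 := by
      refine Nat.eq_of_mul_eq_mul_right hH.pos ?_
      rw [one_mul, ← h, AddSubgroup.relIndex_mul_index hK.le, h]
    exact absurd (AddSubgroup.relIndex_eq_one.1 hrel) hK.not_ge

/-- Proposition 8.1: Hermite normal form matrices of determinant `q` are in
bijection with the subgroups of `ℤᵏ` of index `q`; there are `(qᵏ-1)/(q-1)` of
them, and they are exactly the maximal proper subgroups with quotient of order
`q`. -/
theorem statement18 {k : ℕ} (hk : 1 ≤ k) (q : ℕ) (hq : q.Prime) :
    Set.BijOn rowSpan {A : Matrix (Fin k) (Fin k) ℤ | IsHNF A ∧ A.det = (q : ℤ)}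
      {H : AddSubgroup (Fin k → ℤ) | H.index = q} ∧
    Set.ncard {H : AddSubgroup (Fin k → ℤ) | H.index = q} = (q ^ k - 1) / (q - 1) ∧
    Set.ncard {A : Matrix (Fin k) (Fin k) ℤ | IsHNF A ∧ A.det = (q : ℤ)} =
      (q ^ k - 1) / (q - 1) ∧
    ∀ H : AddSubgroup (Fin k → ℤ),
      H.index = q ↔
        (H ≠ ⊤ ∧ (∀ K : AddSubgroup (Fin k → ℤ), H ≤ K → K = H ∨ K = ⊤) ∧
          Nat.card ((Fin k → ℤ) ⧸ H) = q) := by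
  have hbij := bijOn_rowSpan_isHNF_det_eq (k := k) hq.ne_zero
  have hcard : {A : Matrix (Fin k) (Fin k) ℤ | IsHNF A ∧ A.det = (q : ℤ)}.ncard =
      (q ^ k - 1) / (q - 1) :=
    (ncard_isHNF_det_eq q).trans (sum_finMulAntidiag_prime hq)
  refine ⟨hbij, ?_, hcard, fun H => ⟨fun hH => ?_, fun h => h.2.2⟩⟩
  · rw [← hbij.image_eq, hbij.injOn.ncard_image, hcard]
  · have hmax : IsCoatom H := isCoatom_of_index_prime (hH ▸ hq)
    exact ⟨hmax.1, fun K hK => (hmax.le_iff.1 hK).symm, hH⟩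

end BdS
end
end
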